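/- Let g be a Riemannian metric on the cylinder T¹ × [−1,1] = S¹ × [−1,1] with Sc(g) ≥ 2 everywhere. Then the distance between the two boundary circles satisfies dist_g(S¹×{−1}, S¹×{1}) < π. -/

import Mathlib

/-- First partial derivative of a function of two real variables. -/
noncomputable def pdx (f : ℝ × ℝ → ℝ) (p : ℝ × ℝ) : ℝ := fderiv ℝ f p (1, 0)

/-- Second partial derivative of a function of two real variables. -/
noncomputable def pdy (f : ℝ × ℝ → ℝ) (p : ℝ × ℝ) : ℝ := fderiv ℝ f p (0, 1)

/-- The Gauss curvature of the Riemannian metric `E dx² + 2F dxdy + G dy²`, given by the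
Brioschi formula (which is intrinsic, valid for any abstract metric in coordinates). -/
noncomputable def gaussCurvature (E F G : ℝ × ℝ → ℝ) (p : ℝ × ℝ) : ℝ :=
  (Matrix.det
      !![-(1/2) * pdy (pdy E) p + pdx (pdy F) p - (1/2) * pdx (pdx G) p,
           (1/2) * pdx E p, pdx F p - (1/2) * pdy E p;
         pdy F p - (1/2) * pdx G p, E p, F p;
         (1/2) * pdy G p, F p, G p]
    - Matrix.det
      !![0, (1/2) * pdy E p, (1/2) * pdx G p;
         (1/2) * pdy E p, E p, F p;
         (1/2) * pdx G p, F p, G p]) / (E p * G p - F p ^ 2) ^ 2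

/-- The length of a `C¹` path `γ` (over the parameter interval `[0,1]`) in the Riemannian
metric `E dx² + 2F dxdy + G dy²`. -/
noncomputable def pathLength (E F G : ℝ × ℝ → ℝ) (γ : ℝ → ℝ × ℝ) : ℝ :=
  ∫ t in (0:ℝ)..1,
    Real.sqrt (E (γ t) * (deriv γ t).1 ^ 2 + 2 * F (γ t) * (deriv γ t).1 * (deriv γ t).2 +
      G (γ t) * (deriv γ t).2 ^ 2)


set_option maxHeartbeats 4000000 in
theorem hess_alg (E F G Ex Ey Fx Fy Gx Gy Exx Exy Eyy Fxx Fxy Fyy Gxx Gxy Gyy u w : ℝ)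
    (P1 P2 dP1 dP2 dE dF dG du dw D dD z1 z2 num dnum A0 K : ℝ)
    (hD : D ≠ 0) (hDe : D = E*G-F^2)
    (hP1 : P1 = E*u+F*w) (hP2 : P2 = F*u+G*w)
    (hdP1 : dP1 = (Ex*u*u+2*Fx*u*w+Gx*w*w)/2)
    (hdP2 : dP2 = (Ey*u*u+2*Fy*u*w+Gy*w*w)/2)
    (hdE : dE = Ex*u+Ey*w) (hdF : dF = Fx*u+Fy*w) (hdG : dG = Gx*u+Gy*w)
    (hdu : du = (G*(dP1-dE*u-dF*w)-F*(dP2-dF*u-dG*w))/D)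
    (hdw : dw = (E*(dP2-dF*u-dG*w)-F*(dP1-dE*u-dF*w))/D)
    (hdD : dD = dE*G+E*dG-2*F*dF)
    (hz1 : z1 = -dP2+P2*dD/(2*D)) (hz2 : z2 = dP1-P1*dD/(2*D))
    (hA0 : A0 = (((Exx*P2^2-2*Exy*P1*P2+Eyy*P1^2)*u^2+2*(Fxx*P2^2-2*Fxy*P1*P2+Fyy*P1^2)*u*w
      +(Gxx*P2^2-2*Gxy*P1*P2+Gyy*P1^2)*w^2)
      + 4*((-Ex*P2+Ey*P1)*u*z1+(-Fx*P2+Fy*P1)*(u*z2+w*z1)+(-Gx*P2+Gy*P1)*w*z2)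
      + 2*(E*z1^2+2*F*z1*z2+G*z2^2))/D)
    (hnum : num = 2*((-Ex*P2+Ey*P1)*u*(-P2)+(-Fx*P2+Fy*P1)*(u*P1+w*(-P2))+(-Gx*P2+Gy*P1)*w*P1)
      - (dE*P2^2-2*dF*P1*P2+dG*P1^2))
    (hdnum : dnum = 2*(((-(Exx*u+Exy*w)*P2-Ex*dP2+(Exy*u+Eyy*w)*P1+Ey*dP1)*u*(-P2)
       +(-(Fxx*u+Fxy*w)*P2-Fx*dP2+(Fxy*u+Fyy*w)*P1+Fy*dP1)*(u*P1+w*(-P2))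
       +(-(Gxx*u+Gxy*w)*P2-Gx*dP2+(Gxy*u+Gyy*w)*P1+Gy*dP1)*w*P1)
       + ((-Ex*P2+Ey*P1)*du*(-P2)+(-Fx*P2+Fy*P1)*(du*P1+dw*(-P2))+(-Gx*P2+Gy*P1)*dw*P1)
       + ((-Ex*P2+Ey*P1)*u*(-dP2)+(-Fx*P2+Fy*P1)*(u*dP1+w*(-dP2))+(-Gx*P2+Gy*P1)*w*dP1))
      - (((Exx*u+Exy*w)*u+Ex*du+(Exy*u+Eyy*w)*w+Ey*dw)*P2^2
        -2*((Fxx*u+Fxy*w)*u+Fx*du+(Fxy*u+Fyy*w)*w+Fy*dw)*P1*P2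
        +((Gxx*u+Gxy*w)*u+Gx*du+(Gxy*u+Gyy*w)*w+Gy*dw)*P1^2)
      - (2*dE*P2*dP2-2*dF*(P1*dP2+dP1*P2)+2*dG*P1*dP1))
    (hK : K = (Matrix.det
      !![-(1/2) * Eyy + Fxy - (1/2) * Gxx, (1/2) * Ex, Fx - (1/2) * Ey;
         Fy - (1/2) * Gx, E, F;
         (1/2) * Gy, F, G]
    - Matrix.det
      !![0, (1/2) * Ey, (1/2) * Gx;
         (1/2) * Ey, E, F;
         (1/2) * Gx, F, G]) / D ^ 2) :
    A0 - (dnum/D - num*dD/D^2) = -2*(E*u^2+2*F*u*w+G*w^2)^2*K := by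
  simp only [Matrix.det_fin_three, Matrix.of_apply, Matrix.cons_val', Matrix.cons_val_zero, Matrix.cons_val_one, Matrix.cons_val, Matrix.cons_val_fin_one] at hK
  have h1 : D * du = (G*(dP1-dE*u-dF*w)-F*(dP2-dF*u-dG*w)) := by rw [hdu]; field_simp
  have h2 : D * dw = (E*(dP2-dF*u-dG*w)-F*(dP1-dE*u-dF*w)) := by rw [hdw]; field_simp
  subst hA0 hK hnum hdnum hdu hdw hz1 hz2
  field_simp
  subst hdD hdP1 hdP2 hdE hdF hdG hP1 hP2
  subst hDe
  ring
theorem A1_alg (E F G Ex Ey Fx Fy Gx Gy u w : ℝ)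
    (P1 P2 dP1 dP2 dE dF dG D dD z1 z2 num A1 : ℝ)
    (hD : D ≠ 0) (hDe : D = E*G-F^2)
    (hP1 : P1 = E*u+F*w) (hP2 : P2 = F*u+G*w)
    (hdP1 : dP1 = (Ex*u*u+2*Fx*u*w+Gx*w*w)/2)
    (hdP2 : dP2 = (Ey*u*u+2*Fy*u*w+Gy*w*w)/2)
    (hdE : dE = Ex*u+Ey*w) (hdF : dF = Fx*u+Fy*w) (hdG : dG = Gx*u+Gy*w)
    (hdD : dD = dE*G+E*dG-2*F*dF)
    (hz1 : z1 = -dP2+P2*dD/(2*D)) (hz2 : z2 = dP1-P1*dD/(2*D))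
    (hnum : num = 2*((-Ex*P2+Ey*P1)*u*(-P2)+(-Fx*P2+Fy*P1)*(u*P1+w*(-P2))+(-Gx*P2+Gy*P1)*w*P1)
      - (dE*P2^2-2*dF*P1*P2+dG*P1^2))
    (hA1 : A1 = 2*(((-Ex*P2+Ey*P1)*u*(-P2)+(-Fx*P2+Fy*P1)*(u*P1+w*(-P2))+(-Gx*P2+Gy*P1)*w*P1)
     + (-E*P2*z1+F*(P1*z1-P2*z2)+G*P1*z2))/D) :
    A1 = num/D := by
  subst hA1 hnum hz1 hz2
  field_simp
  subst hdD hdP1 hdP2 hdE hdF hdG hP1 hP2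
  subst hDe
  ring


namespace TB
open MeasureTheory Set Filter Topology

/-- Lebesgue measure on the parameter interval. -/
noncomputable abbrev mu : Measure ℝ := volume.restrict (Ioc (0:ℝ) 1)

/-- The primitive with initial value `a`. -/
noncomputable def prim (a : ℝ) (u : ℝ → ℝ) (t : ℝ) : ℝ := a + ∫ s in (0:ℝ)..t, u s

theorem iint (f : ℝ → ℝ) : ∫ t in (0:ℝ)..1, f t = ∫ t, f t ∂mu :=
  intervalIntegral.integral_of_le zero_le_one

theorem ii_iff {f : ℝ → ℝ} : IntervalIntegrable f volume 0 1 ↔ Integrable f mu := by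
  rw [intervalIntegrable_iff_integrableOn_Ioc_of_le zero_le_one]; rfl

theorem cont_aesm {e : ℝ → ℝ} (he : ContinuousOn e (Icc 0 1)) : AEStronglyMeasurable e mu :=
  (he.mono Ioc_subset_Icc_self).aestronglyMeasurable measurableSet_Ioc

theorem cont_bdd {e : ℝ → ℝ} (he : ContinuousOn e (Icc 0 1)) :
    ∃ C, 0 ≤ C ∧ ∀ t ∈ Icc (0:ℝ) 1, |e t| ≤ C := by
  obtain ⟨C, hC⟩ := isCompact_Icc.exists_bound_of_continuousOn he
  exact ⟨C, (norm_nonneg _).trans (hC 0 (by simp)), hC⟩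

theorem ae_mu {p : ℝ → Prop} (h : ∀ t ∈ Icc (0:ℝ) 1, p t) : ∀ᵐ t ∂mu, p t := by
  filter_upwards [ae_restrict_mem measurableSet_Ioc] with t ht
  exact h t ⟨ht.1.le, ht.2⟩

theorem cont_memLp {e : ℝ → ℝ} (he : ContinuousOn e (Icc 0 1)) (p : ENNReal) : MemLp e p mu := by
  obtain ⟨C, _, hC⟩ := cont_bdd he
  exact MemLp.of_bound (cont_aesm he) C (ae_mu hC)

theorem cont_mul_memLp {e f : ℝ → ℝ} (he : ContinuousOn e (Icc 0 1)) (hf : MemLp f 2 mu) :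
    MemLp (fun t => e t * f t) 2 mu :=
  MemLp.mul (p := ⊤) (q := 2) hf (cont_memLp he ⊤)

theorem mul_int {f g : ℝ → ℝ} (hf : MemLp f 2 mu) (hg : MemLp g 2 mu) :
    Integrable (fun t => f t * g t) mu := MemLp.integrable_mul hf hg

theorem cmul_int {e f g : ℝ → ℝ} (he : ContinuousOn e (Icc 0 1))
    (hf : MemLp f 2 mu) (hg : MemLp g 2 mu) :
    Integrable (fun t => e t * f t * g t) mu := mul_int (cont_mul_memLp he hf) hg

theorem memLp_ii {u : ℝ → ℝ} (hu : MemLp u 2 mu) : IntervalIntegrable u volume 0 1 :=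
  ii_iff.2 (hu.integrable (by norm_num))

theorem prim_cont {u : ℝ → ℝ} (a : ℝ) (hu : IntervalIntegrable u volume 0 1) :
    ContinuousOn (prim a u) (Icc 0 1) := by
  have h := intervalIntegral.continuousOn_primitive_interval (μ := volume) (f := u) (a := 0) (b := 1)
    (by rw [uIcc_of_le zero_le_one, integrableOn_Icc_iff_integrableOn_Ioc]; exact ii_iff.1 hu)
  rw [uIcc_of_le zero_le_one] at h
  exact continuousOn_const.add h

theorem inner_toLp {f g : ℝ → ℝ} (hf : MemLp f 2 mu) (hg : MemLp g 2 mu) :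
    inner ℝ (hf.toLp f) (hg.toLp g) = ∫ t, f t * g t ∂mu := by
  rw [L2.inner_def]
  apply integral_congr_ae
  filter_upwards [hf.coeFn_toLp, hg.coeFn_toLp] with t h1 h2
  rw [h1, h2]; simp [mul_comm]

theorem cs {f g : ℝ → ℝ} (hf : MemLp f 2 mu) (hg : MemLp g 2 mu) :
    (∫ t, f t * g t ∂mu) ^ 2 ≤ (∫ t, f t ^ 2 ∂mu) * (∫ t, g t ^ 2 ∂mu) := by
  have := real_inner_mul_inner_self_le (hf.toLp f) (hg.toLp g)
  rw [inner_toLp, inner_toLp, inner_toLp] at this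
  simpa [pow_two] using this

theorem weak_seq (f : ℕ → ℝ → ℝ) (hf : ∀ n, MemLp (f n) 2 mu) (C : ℝ)
    (hC : ∀ n, ∫ t, f n t ^ 2 ∂mu ≤ C) :
    ∃ g, MemLp g 2 mu ∧ ∃ φ : ℕ → ℕ, StrictMono φ ∧ ∀ h, MemLp h 2 mu →
      Tendsto (fun n => ∫ t, h t * f (φ n) t ∂mu) atTop (𝓝 (∫ t, h t * g t ∂mu)) := by
  let H := Lp ℝ 2 mu
  have : Fact ((2:ENNReal) ≠ ⊤) := ⟨by norm_num⟩
  let T : ℕ → WeakDual ℝ H := fun n => StrongDual.toWeakDual (InnerProductSpace.toDual ℝ H ((hf n).toLp (f n)))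
  have hT : ∀ n, T n ∈ (WeakDual.toStrongDual ⁻¹' Metric.closedBall (0 : StrongDual ℝ H) (Real.sqrt C)) := by
    intro n
    rw [mem_preimage, mem_closedBall_zero_iff]
    have : ‖WeakDual.toStrongDual (T n)‖ = ‖(hf n).toLp (f n)‖ := by
      change ‖InnerProductSpace.toDual ℝ H ((hf n).toLp (f n))‖ = _
      exact LinearIsometryEquiv.norm_map _ _
    rw [this]
    apply Real.le_sqrt_of_sq_le
    rw [← real_inner_self_eq_norm_sq, inner_toLp]
    simpa [pow_two] using hC n
  obtain ⟨L, -, φ, hφ, hL⟩ := WeakDual.isSeqCompact_closedBall ℝ H 0 (Real.sqrt C) hT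
  let g := (InnerProductSpace.toDual ℝ H).symm (WeakDual.toStrongDual L)
  refine ⟨g, Lp.memLp g, φ, hφ, fun h hh => ?_⟩
  have h1 := (WeakBilin.tendsto_iff_forall_eval_tendsto _ (by
    intro a b hab; ext z; exact congrArg (fun q => q z) hab) ).1 hL (hh.toLp h)
  have e1 : ∀ n, (T (φ n)) (hh.toLp h) = ∫ t, h t * f (φ n) t ∂mu := by
    intro n
    change inner ℝ ((hf (φ n)).toLp (f (φ n))) (hh.toLp h) = _
    rw [real_inner_comm, inner_toLp]
  have e2 : L (hh.toLp h) = ∫ t, h t * g t ∂mu := by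
    have : inner ℝ g (hh.toLp h) = L (hh.toLp h) := InnerProductSpace.toDual_symm_apply
    rw [← this, real_inner_comm, ← inner_toLp hh (Lp.memLp g)]
    simp
  rw [← e2]
  refine Tendsto.congr (fun n => e1 n) ?_
  exact h1

theorem weak_strong {f : ℕ → ℝ → ℝ} (hf : ∀ n, MemLp (f n) 2 mu) {C : ℝ}
    (hC : ∀ n, ∫ t, f n t ^ 2 ∂mu ≤ C) {g : ℝ → ℝ}
    (hw : ∀ h, MemLp h 2 mu →
      Tendsto (fun n => ∫ t, h t * f n t ∂mu) atTop (𝓝 (∫ t, h t * g t ∂mu)))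
    {e : ℕ → ℝ → ℝ} {e0 : ℝ → ℝ} (he : ∀ n, ContinuousOn (e n) (Icc 0 1))
    (he0 : ContinuousOn e0 (Icc 0 1)) {M : ℝ} (hM : ∀ n, ∀ t ∈ Icc (0:ℝ) 1, |e n t| ≤ M)
    (hlim : ∀ t ∈ Icc (0:ℝ) 1, Tendsto (fun n => e n t) atTop (𝓝 (e0 t)))
    {h : ℝ → ℝ} (hh : MemLp h 2 mu) :
    Tendsto (fun n => ∫ t, e n t * h t * f n t ∂mu) atTop (𝓝 (∫ t, e0 t * h t * g t ∂mu)) := by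
  have hM0 : ∀ t ∈ Icc (0:ℝ) 1, |e0 t| ≤ M := fun t ht =>
    le_of_tendsto ((hlim t ht).abs) (Eventually.of_forall fun n => hM n t ht)
  have h1 := hw _ (cont_mul_memLp he0 hh)
  have hd : ∀ n, MemLp (fun t => (e n t - e0 t) * h t) 2 mu := fun n =>
    cont_mul_memLp ((he n).sub he0) hh
  have h2 : Tendsto (fun n => ∫ t, ((e n t - e0 t) * h t)^2 ∂mu) atTop (𝓝 (∫ t, (0:ℝ) ∂mu)) := by
    refine tendsto_integral_of_dominated_convergence (fun t => (2*M)^2 * (h t)^2) 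
      (fun n => (hd n).integrable_sq.aestronglyMeasurable) (hh.integrable_sq.const_mul _) ?_ ?_
    · intro n
      apply ae_mu
      intro t ht
      have a1 := abs_le.1 (hM n t ht)
      have a2 := abs_le.1 (hM0 t ht)
      rw [Real.norm_of_nonneg (sq_nonneg _), mul_pow]
      apply mul_le_mul_of_nonneg_right _ (sq_nonneg _)
      apply sq_le_sq'  <;> linarith
    · apply ae_mu
      intro t ht
      have := (((hlim t ht).sub_const (e0 t)).mul_const (h t)).pow 2
      simpa using this
  rw [integral_zero] at h2
  have h3 : Tendsto (fun n => ∫ t, ((e n t - e0 t) * h t) * f n t ∂mu) atTop (𝓝 0) := by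
    have h4 : Tendsto (fun n => Real.sqrt ((∫ t, ((e n t - e0 t) * h t)^2 ∂mu) * C)) atTop (𝓝 0) := by
      have := (h2.mul_const C).sqrt
      simpa using this
    refine squeeze_zero_norm (fun n => ?_) h4
    apply Real.abs_le_sqrt
    refine (cs (hd n) (hf n)).trans ?_
    exact mul_le_mul_of_nonneg_left (hC n) (integral_nonneg fun t => sq_nonneg _)
  have h5 := h3.add h1
  rw [zero_add] at h5
  refine h5.congr fun n => ?_
  rw [← integral_add (mul_int (hd n) (hf n)) (cmul_int he0 hh (hf n))]
  congr 1; ext t; ring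

end TB


namespace TB
open MeasureTheory Set Filter Topology

/-- A smooth metric on the plane, periodic in the first variable. -/
structure Met (E F G : ℝ × ℝ → ℝ) : Prop where
  hE : ContDiff ℝ (⊤ : ℕ∞) E
  hF : ContDiff ℝ (⊤ : ℕ∞) F
  hG : ContDiff ℝ (⊤ : ℕ∞) G
  hEper : ∀ p : ℝ × ℝ, E (p.1 + 1, p.2) = E p
  hFper : ∀ p : ℝ × ℝ, F (p.1 + 1, p.2) = F p
  hGper : ∀ p : ℝ × ℝ, G (p.1 + 1, p.2) = G p
  hpos : ∀ p : ℝ × ℝ, 0 < E p ∧ 0 < E p * G p - F p ^ 2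

/-- The energy density. -/
def Lag (E F G : ℝ × ℝ → ℝ) (x y u w : ℝ) : ℝ :=
  E (x, y) * u * u + 2 * (F (x, y) * u * w) + G (x, y) * w * w

/-- Admissible velocities. -/
structure Adm (u w : ℝ → ℝ) : Prop where
  hu : MemLp u 2 mu
  hw : MemLp w 2 mu
  hmem : ∀ t ∈ Icc (0:ℝ) 1, prim (-1) w t ∈ Icc (-1:ℝ) 1
  hend : prim (-1) w 1 = 1

/-- The energy of the path. -/
noncomputable def en (E F G : ℝ × ℝ → ℝ) (a : ℝ) (u w : ℝ → ℝ) : ℝ :=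
  ∫ t, Lag E F G (prim a u t) (prim (-1) w t) (u t) (w t) ∂mu

theorem per_fract {f : ℝ × ℝ → ℝ} (hper : ∀ p : ℝ × ℝ, f (p.1 + 1, p.2) = f p) (n : ℤ) (x y : ℝ) :
    f (x - n, y) = f (x, y) := by
  have : Function.Periodic (fun x => f (x, y)) 1 := fun x => hper (x, y)
  simpa using this.sub_int_mul_eq n (x := x)

theorem strip_bdd {f : ℝ × ℝ → ℝ} (hf : Continuous f) (hper : ∀ p : ℝ × ℝ, f (p.1 + 1, p.2) = f p) :
    ∃ M, 0 ≤ M ∧ ∀ x y, y ∈ Icc (-1:ℝ) 1 → |f (x, y)| ≤ M := by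
  obtain ⟨M, hM⟩ := (isCompact_Icc.prod isCompact_Icc :
    IsCompact (Icc (0:ℝ) 1 ×ˢ Icc (-1:ℝ) 1)).exists_bound_of_continuousOn hf.continuousOn
  refine ⟨M, (norm_nonneg _).trans (hM (0, 0) (by simp)), fun x y hy => ?_⟩
  rw [← per_fract hper ⌊x⌋ x y]
  exact hM _ ⟨⟨Int.fract_nonneg x, (Int.fract_lt_one x).le⟩, hy⟩

theorem strip_pos {f : ℝ × ℝ → ℝ} (hf : Continuous f) (hper : ∀ p : ℝ × ℝ, f (p.1 + 1, p.2) = f p)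
    (hpos : ∀ p, 0 < f p) :
    ∃ c, 0 < c ∧ ∀ x y, y ∈ Icc (-1:ℝ) 1 → c ≤ f (x, y) := by
  obtain ⟨p, -, hp⟩ := (isCompact_Icc.prod isCompact_Icc :
    IsCompact (Icc (0:ℝ) 1 ×ˢ Icc (-1:ℝ) 1)).exists_isMinOn ⟨(0,0), by simp⟩ hf.continuousOn
  refine ⟨f p, hpos p, fun x y hy => ?_⟩
  rw [← per_fract hper ⌊x⌋ x y]
  have hm : ((x - ⌊x⌋, y) : ℝ × ℝ) ∈ Icc (0:ℝ) 1 ×ˢ Icc (-1:ℝ) 1 :=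
    ⟨⟨Int.fract_nonneg x, (Int.fract_lt_one x).le⟩, hy⟩
  exact hp hm

variable {E F G : ℝ × ℝ → ℝ}

theorem Met.posG (h : Met E F G) (p) : 0 < G p := by
  have := h.hpos p
  by_contra hc
  nlinarith [sq_nonneg (F p)]

theorem Met.coer (h : Met E F G) :
    ∃ c, 0 < c ∧ ∀ x y u w, y ∈ Icc (-1:ℝ) 1 → c * (u ^ 2 + w ^ 2) ≤ Lag E F G x y u w := by
  have hpos : ∀ p, 0 < E p + G p := fun p => add_pos (h.hpos p).1 (h.posG p)
  obtain ⟨c, hc, hc'⟩ := strip_pos (f := fun p => (E p * G p - F p ^ 2) / (E p + G p))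
    (Continuous.div (((h.hE.continuous.mul h.hG.continuous).sub (h.hF.continuous.pow 2)))
      (h.hE.continuous.add h.hG.continuous) (fun p => (hpos p).ne'))
    (fun p => by simp only [h.hEper, h.hFper, h.hGper])
    (fun p => div_pos (h.hpos p).2 (hpos p))
  refine ⟨c, hc, fun x y u w hy => ?_⟩
  refine (mul_le_mul_of_nonneg_right (hc' x y hy) (by positivity)).trans ?_
  simp only [Lag]
  rw [div_mul_eq_mul_div, div_le_iff₀ (hpos _)]
  nlinarith [sq_nonneg (E (x,y) * u + F (x,y) * w), sq_nonneg (F (x,y) * u + G (x,y) * w)]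

theorem Met.conv (h : Met E F G) (x y u w u' w' : ℝ) :
    2 * (E (x,y) * u * u' + F (x,y) * u * w' + F (x,y) * w * u' + G (x,y) * w * w')
      - Lag E F G x y u w ≤ Lag E F G x y u' w' := by
  have h1 := h.hpos (x, y)
  simp only [Lag]
  have : 0 ≤ E (x,y) * (E (x,y) * (u'-u)^2 + 2 * F (x,y) * (u'-u)*(w'-w) + G (x,y) * (w'-w)^2) := by
    nlinarith [sq_nonneg (E (x,y) * (u'-u) + F (x,y) * (w'-w)),
      mul_nonneg h1.2.le (sq_nonneg (w'-w))]
  have := nonneg_of_mul_nonneg_right this h1.1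
  nlinarith

theorem comp_cont {f : ℝ × ℝ → ℝ} (hf : Continuous f) {u w : ℝ → ℝ} (a b : ℝ)
    (hu : MemLp u 2 mu) (hw : MemLp w 2 mu) :
    ContinuousOn (fun t => f (prim a u t, prim b w t)) (Icc 0 1) :=
  hf.comp_continuousOn ((prim_cont a (memLp_ii hu)).prodMk (prim_cont b (memLp_ii hw)))

theorem Lag_int (h : Met E F G) (a b : ℝ) {u w u' w' : ℝ → ℝ} 
    (hu : MemLp u 2 mu) (hw : MemLp w 2 mu) (hu' : MemLp u' 2 mu) (hw' : MemLp w' 2 mu) :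
    Integrable (fun t => Lag E F G (prim a u t) (prim b w t) (u' t) (w' t)) mu :=
  ((cmul_int (comp_cont h.hE.continuous a b hu hw) hu' hu').add
    ((cmul_int (comp_cont h.hF.continuous a b hu hw) hu' hw').const_mul 2)).add
    (cmul_int (comp_cont h.hG.continuous a b hu hw) hw' hw')

theorem en_shift (h : Met E F G) (a : ℝ) (u w : ℝ → ℝ) (n : ℤ) :
    en E F G (a - n) u w = en E F G a u w := by
  unfold en
  congr 1; ext t
  have : prim (a - n) u t = prim a u t - n := by unfold prim; ring
  simp only [Lag, this, per_fract h.hEper, per_fract h.hFper, per_fract h.hGper]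

theorem en_lower {c : ℝ} (h : Met E F G)
    (hc' : ∀ x y u w, y ∈ Icc (-1:ℝ) 1 → c * (u ^ 2 + w ^ 2) ≤ Lag E F G x y u w)
    (a : ℝ) {u w : ℝ → ℝ} (ha : Adm u w) :
    c * (∫ t, u t ^ 2 ∂mu + ∫ t, w t ^ 2 ∂mu) ≤ en E F G a u w := by
  rw [← integral_add ha.hu.integrable_sq ha.hw.integrable_sq, ← integral_const_mul]
  apply integral_mono_ae
  · exact (ha.hu.integrable_sq.add ha.hw.integrable_sq).const_mul c
  · exact Lag_int h a (-1) ha.hu ha.hw ha.hu ha.hw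
  · exact ae_mu fun t ht => hc' _ _ _ _ (ha.hmem t ht)

theorem prim_eq_ind (a : ℝ) {u : ℝ → ℝ} {t : ℝ} (ht : t ∈ Icc (0:ℝ) 1) :
    prim a u t = a + ∫ s, (Ioc (0:ℝ) t).indicator (fun _ => (1:ℝ)) s * u s ∂mu := by
  unfold prim
  rw [intervalIntegral.integral_of_le ht.1]
  have : ∀ s, (Ioc (0:ℝ) t).indicator (fun _ => (1:ℝ)) s * u s = (Ioc (0:ℝ) t).indicator u s := by
    intro s; by_cases hs : s ∈ Ioc (0:ℝ) t <;> simp [hs]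
  simp_rw [this]
  rw [integral_indicator measurableSet_Ioc, Measure.restrict_restrict measurableSet_Ioc,
    inter_eq_left.2 (Ioc_subset_Ioc_right ht.2)]

theorem ind_memLp (t : ℝ) : MemLp ((Ioc (0:ℝ) t).indicator (fun _ => (1:ℝ))) 2 mu :=
  (memLp_const (1:ℝ)).indicator measurableSet_Ioc

theorem comb {f1 f2 f3 f4 g1 g2 g3 : ℝ → ℝ} (h1 : Integrable f1 mu) (h2 : Integrable f2 mu)
    (h3 : Integrable f3 mu) (h4 : Integrable f4 mu) (k1 : Integrable g1 mu) (k2 : Integrable g2 mu)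
    (k3 : Integrable g3 mu) :
    2 * (∫ t, f1 t ∂mu + ∫ t, f2 t ∂mu + ∫ t, f3 t ∂mu + ∫ t, f4 t ∂mu) -
      (∫ t, g1 t ∂mu + 2 * ∫ t, g2 t ∂mu + ∫ t, g3 t ∂mu) =
    ∫ t, (2 * (f1 t + f2 t + f3 t + f4 t) - (g1 t + 2 * g2 t + g3 t)) ∂mu := by
  rw [integral_sub (by fun_prop) (by fun_prop), integral_const_mul,
    integral_add (by fun_prop) (by fun_prop), integral_add (by fun_prop) (by fun_prop),
    integral_add (by fun_prop) (by fun_prop), integral_add (by fun_prop) (by fun_prop),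
    integral_add (by fun_prop) (by fun_prop), integral_const_mul]

theorem exists_min (h : Met E F G) :
    ∃ a u w, Adm u w ∧ ∀ a' u' w', Adm u' w' → en E F G a u w ≤ en E F G a' u' w' := by
  obtain ⟨c, hc, hc'⟩ := h.coer
  let S : Set ℝ := {m | ∃ a u w, Adm u w ∧ en E F G a u w = m}
  have hb : ∀ m ∈ S, 0 ≤ m := by
    rintro m ⟨a, u, w, ha, rfl⟩
    refine le_trans ?_ (en_lower h hc' a ha)
    have h1 : 0 ≤ ∫ t, u t ^ 2 ∂mu := integral_nonneg fun t => sq_nonneg _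
    have h2 : 0 ≤ ∫ t, w t ^ 2 ∂mu := integral_nonneg fun t => sq_nonneg _
    positivity
  have hne : S.Nonempty := by
    refine ⟨_, 0, fun _ => 0, fun _ => 2, ⟨memLp_const _, memLp_const _, ?_, ?_⟩, rfl⟩
    · intro t ht
      simp only [prim, intervalIntegral.integral_const, smul_eq_mul]
      constructor <;> linarith [ht.1, ht.2]
    · simp [prim]; norm_num
  have hbb : BddBelow S := ⟨0, hb⟩
  obtain ⟨m, -, hm, hmS⟩ := exists_seq_tendsto_sInf hne hbb
  choose a0 u0 w0 hA0 hen0 using hmS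
  -- normalise the starting points
  let a1 : ℕ → ℝ := fun n => a0 n - ⌊a0 n⌋
  have ha1 : ∀ n, a1 n ∈ Icc (0:ℝ) 1 := fun n =>
    ⟨Int.fract_nonneg _, (Int.fract_lt_one _).le⟩
  have hen1 : ∀ n, en E F G (a1 n) (u0 n) (w0 n) = m n := fun n => by
    rw [← hen0 n]; exact en_shift h _ _ _ _
  obtain ⟨C, hC⟩ := hm.bddAbove_range
  have hC' : ∀ n, m n ≤ C := fun n => hC ⟨n, rfl⟩
  have hbd : ∀ n, ∫ t, u0 n t ^ 2 ∂mu ≤ C / c ∧ ∫ t, w0 n t ^ 2 ∂mu ≤ C / c := by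
    intro n
    have h1 : 0 ≤ ∫ t, u0 n t ^ 2 ∂mu := integral_nonneg fun t => sq_nonneg _
    have h2 : 0 ≤ ∫ t, w0 n t ^ 2 ∂mu := integral_nonneg fun t => sq_nonneg _
    have h3 := (en_lower h hc' (a1 n) (hA0 n)).trans ((hen1 n).le.trans (hC' n))
    rw [le_div_iff₀ hc, le_div_iff₀ hc]
    constructor <;> nlinarith
  -- extract limits
  obtain ⟨a, -, φ1, hφ1, hal⟩ := isCompact_Icc.tendsto_subseq ha1
  obtain ⟨u, hu, φ2, hφ2, hul⟩ := weak_seq (fun n => u0 (φ1 n)) (fun n => (hA0 _).hu) _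
    (fun n => (hbd _).1)
  obtain ⟨w, hw, φ3, hφ3, hwl⟩ := weak_seq (fun n => w0 (φ1 (φ2 n))) (fun n => (hA0 _).hw) _
    (fun n => (hbd _).2)
  let ψ : ℕ → ℕ := fun n => φ1 (φ2 (φ3 n))
  have hψ : StrictMono ψ := hφ1.comp (hφ2.comp hφ3)
  have al : Tendsto (fun n => a1 (ψ n)) atTop (𝓝 a) :=
    hal.comp (hφ2.comp hφ3).tendsto_atTop
  have ul : ∀ g, MemLp g 2 mu →
      Tendsto (fun n => ∫ t, g t * u0 (ψ n) t ∂mu) atTop (𝓝 (∫ t, g t * u t ∂mu)) := fun g hg =>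
    (hul g hg).comp hφ3.tendsto_atTop
  have wl : ∀ g, MemLp g 2 mu →
      Tendsto (fun n => ∫ t, g t * w0 (ψ n) t ∂mu) atTop (𝓝 (∫ t, g t * w t ∂mu)) := hwl
  have ml : Tendsto (fun n => m (ψ n)) atTop (𝓝 (sInf S)) := hm.comp hψ.tendsto_atTop
  have xl : ∀ t ∈ Icc (0:ℝ) 1, Tendsto (fun n => prim (a1 (ψ n)) (u0 (ψ n)) t) atTop
      (𝓝 (prim a u t)) := by
    intro t ht
    simp_rw [prim_eq_ind _ ht]
    exact al.add (ul _ (ind_memLp t))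
  have yl : ∀ t ∈ Icc (0:ℝ) 1, Tendsto (fun n => prim (-1) (w0 (ψ n)) t) atTop
      (𝓝 (prim (-1) w t)) := by
    intro t ht
    simp_rw [prim_eq_ind _ ht]
    exact (wl _ (ind_memLp t)).const_add (-1)
  have hA : Adm u w := by
    refine ⟨hu, hw, fun t ht => ?_, ?_⟩
    · exact isClosed_Icc.mem_of_tendsto (yl t ht) (Eventually.of_forall fun n => (hA0 _).hmem t ht)
    · refine tendsto_nhds_unique (yl 1 (by simp)) ?_
      simp_rw [(hA0 _).hend]; exact tendsto_const_nhds
  have key : ∀ f : ℝ × ℝ → ℝ, Continuous f → (∀ p : ℝ × ℝ, f (p.1 + 1, p.2) = f p) →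
      ∀ (v : ℕ → ℝ → ℝ) (v0 : ℝ → ℝ), (∀ n, MemLp (v n) 2 mu) → 
      (∀ n, ∫ t, v n t ^ 2 ∂mu ≤ C / c + ∫ t, u t ^ 2 ∂mu + ∫ t, w t ^ 2 ∂mu) →
      (∀ g, MemLp g 2 mu → Tendsto (fun n => ∫ t, g t * v n t ∂mu) atTop (𝓝 (∫ t, g t * v0 t ∂mu))) →
      ∀ h, MemLp h 2 mu →
      Tendsto (fun n => ∫ t, f (prim (a1 (ψ n)) (u0 (ψ n)) t, prim (-1) (w0 (ψ n)) t) * h t * v n t ∂mu)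
        atTop (𝓝 (∫ t, f (prim a u t, prim (-1) w t) * h t * v0 t ∂mu)) := by
    intro f hf hper v v0 hv hvC hvl g hg
    obtain ⟨M, hM0, hM⟩ := strip_bdd hf hper
    exact weak_strong hv hvC hvl (fun n => comp_cont hf _ _ (hA0 _).hu (hA0 _).hw)
      (comp_cont hf _ _ hu hw) (M := M) (fun n t ht => hM _ _ ((hA0 _).hmem t ht))
      (fun t ht => (hf.tendsto _).comp ((xl t ht).prodMk_nhds (yl t ht))) hg
  have i1 : 0 ≤ ∫ t, u t ^ 2 ∂mu := integral_nonneg fun t => sq_nonneg _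
  have i2 : 0 ≤ ∫ t, w t ^ 2 ∂mu := integral_nonneg fun t => sq_nonneg _
  have i3 : 0 ≤ C / c := (integral_nonneg fun t => sq_nonneg _).trans (hbd 0).1
  have cE := h.hE.continuous
  have cF := h.hF.continuous
  have cG := h.hG.continuous
  have bu : ∀ n, ∫ t, u0 (ψ n) t ^ 2 ∂mu ≤ C / c + ∫ t, u t ^ 2 ∂mu + ∫ t, w t ^ 2 ∂mu :=
    fun n => (hbd (ψ n)).1.trans (by linarith)
  have bw : ∀ n, ∫ t, w0 (ψ n) t ^ 2 ∂mu ≤ C / c + ∫ t, u t ^ 2 ∂mu + ∫ t, w t ^ 2 ∂mu :=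
    fun n => (hbd (ψ n)).2.trans (by linarith)
  have k1 := key E cE h.hEper _ _ (fun n => (hA0 (ψ n)).hu) bu ul u hu
  have k2 := key F cF h.hFper _ _ (fun n => (hA0 (ψ n)).hw) bw wl u hu
  have k3 := key F cF h.hFper _ _ (fun n => (hA0 (ψ n)).hu) bu ul w hw
  have k4 := key G cG h.hGper _ _ (fun n => (hA0 (ψ n)).hw) bw wl w hw
  have l1 := key E cE h.hEper _ u (fun n => hu) (fun n => by linarith) (fun g _ => tendsto_const_nhds) u hu
  have l2 := key F cF h.hFper _ w (fun n => hw) (fun n => by linarith) (fun g _ => tendsto_const_nhds) u hu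
  have l4 := key G cG h.hGper _ w (fun n => hw) (fun n => by linarith) (fun g _ => tendsto_const_nhds) w hw
  have tot := (((k1.add k2).add k3).add k4).const_mul 2 |>.sub ((l1.add (l2.const_mul 2)).add l4)
  have fin : en E F G a u w ≤ sInf S := by
    have : en E F G a u w = (∫ t, E (prim a u t, prim (-1) w t) * u t * u t ∂mu
      + 2 * ∫ t, F (prim a u t, prim (-1) w t) * u t * w t ∂mu)
      + ∫ t, G (prim a u t, prim (-1) w t) * w t * w t ∂mu := by
      rw [← integral_const_mul, ← integral_add, ← integral_add]
      · rfl
      · exact (cmul_int (comp_cont cE _ _ hu hw) hu hu).add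
          ((cmul_int (comp_cont cF _ _ hu hw) hu hw).const_mul 2)
      · exact (cmul_int (comp_cont cG _ _ hu hw) hw hw)
      · exact (cmul_int (comp_cont cE _ _ hu hw) hu hu)
      · exact ((cmul_int (comp_cont cF _ _ hu hw) hu hw).const_mul 2)
    have e2 : ∫ t, F (prim a u t, prim (-1) w t) * w t * u t ∂mu =
      ∫ t, F (prim a u t, prim (-1) w t) * u t * w t ∂mu := by congr 1; ext t; ring
    rw [e2] at tot
    refine le_trans (le_of_eq ?_) (le_of_tendsto_of_tendsto' tot ml fun n => ?_)
    · rw [this]; ring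
    rw [← hen1 (ψ n)]
    have hu' := (hA0 (ψ n)).hu
    have hw' := (hA0 (ψ n)).hw
    have q1 := cmul_int (comp_cont cE (a1 (ψ n)) (-1) hu' hw') hu hu'
    have q2 := cmul_int (comp_cont cF (a1 (ψ n)) (-1) hu' hw') hu hw'
    have q3 := cmul_int (comp_cont cF (a1 (ψ n)) (-1) hu' hw') hw hu'
    have q4 := cmul_int (comp_cont cG (a1 (ψ n)) (-1) hu' hw') hw hw'
    have r1 := cmul_int (comp_cont cE (a1 (ψ n)) (-1) hu' hw') hu hu
    have r2' := (cmul_int (comp_cont cF (a1 (ψ n)) (-1) hu' hw') hu hw)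
    have r2 := r2'.const_mul 2
    have r4 := cmul_int (comp_cont cG (a1 (ψ n)) (-1) hu' hw') hw hw
    rw [comb q1 q2 q3 q4 r1 r2' r4]
    apply integral_mono
    · exact ((((q1.add q2).add q3).add q4).const_mul 2).sub ((r1.add r2).add r4)
    · exact Lag_int h _ _ hu' hw' hu' hw'
    · intro t
      exact h.conv _ _ _ _ _ _
  exact ⟨a, u, w, hA, fun a' u' w' hA' => fin.trans (csInf_le hbb ⟨a', u', w', hA', rfl⟩)⟩

end TB


namespace TB
open MeasureTheory Set Filter Topology

/-- Energy minimisers. -/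
structure IsMin (E F G : ℝ × ℝ → ℝ) (a : ℝ) (u w : ℝ → ℝ) : Prop where
  met : Met E F G
  adm : Adm u w
  le : ∀ a' u' w', Adm u' w' → en E F G a u w ≤ en E F G a' u' w'

variable {E F G : ℝ × ℝ → ℝ}

theorem Lag_nonneg (h : Met E F G) (x y u w : ℝ) : 0 ≤ Lag E F G x y u w := by
  have := h.conv x y 0 0 u w
  simpa [Lag] using this

theorem IsMin.en_pos {a : ℝ} {u w : ℝ → ℝ} (h : IsMin E F G a u w) : 0 < en E F G a u w := by
  obtain ⟨c, hc, hc'⟩ := h.met.coer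
  have h1 := en_lower h.met hc' a h.adm
  have h2 : 0 ≤ ∫ t, u t ^ 2 ∂mu := integral_nonneg fun t => sq_nonneg _
  have h3 := cs (memLp_const (1:ℝ)) h.adm.hw
  have h4 := h.adm.hend
  unfold prim at h4
  rw [iint] at h4
  have h5 : ∫ t, w t ∂mu = 2 := by linarith
  simp only [one_mul] at h3
  rw [h5] at h3
  simp at h3
  nlinarith

theorem comp_aff_ii {f : ℝ → ℝ} (hf : IntervalIntegrable f volume 0 1) {α β : ℝ} (h0 : 0 ≤ α)
    (hab : α < β) (h1 : β ≤ 1) :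
    IntervalIntegrable (fun s => f (α + (β - α) * s)) volume 0 1 := by
  have e1 : IntervalIntegrable f volume α β := hf.mono_set (by
    rw [uIcc_of_le hab.le, uIcc_of_le zero_le_one]; exact Icc_subset_Icc h0 h1)
  have e2 := e1.comp_add_left α
  have e3 := e2.comp_mul_left (c := β - α)
  rw [sub_self, zero_div, div_self (by linarith)] at e3
  exact e3

theorem comp_aff_memLp {f : ℝ → ℝ} (hf : MemLp f 2 mu) {α β : ℝ} (h0 : 0 ≤ α)
    (hab : α < β) (h1 : β ≤ 1) :
    MemLp (fun s => (β - α) * f (α + (β - α) * s)) 2 mu := by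
  apply MemLp.const_mul
  have e1 := ii_iff.1 (comp_aff_ii (memLp_ii hf) h0 hab h1)
  rw [memLp_two_iff_integrable_sq e1.aestronglyMeasurable]
  exact ii_iff.1 (comp_aff_ii (ii_iff.2 hf.integrable_sq) h0 hab h1)

theorem sub_ii {f : ℝ → ℝ} (hf : IntervalIntegrable f volume 0 1) {s t : ℝ} (hs : s ∈ Icc (0:ℝ) 1)
    (ht : t ∈ Icc (0:ℝ) 1) : IntervalIntegrable f volume s t :=
  hf.mono_set (by rw [uIcc_of_le zero_le_one]; exact uIcc_subset_Icc hs ht)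

theorem prim_aff {f : ℝ → ℝ} (a : ℝ) (hf : IntervalIntegrable f volume 0 1) {α β : ℝ} (h0 : 0 ≤ α)
    (hab : α < β) (h1 : β ≤ 1) {s : ℝ} (hs : s ∈ Icc (0:ℝ) 1) :
    prim (prim a f α) (fun s => (β - α) * f (α + (β - α) * s)) s = prim a f (α + (β - α) * s) := by
  have hα : α ∈ Icc (0:ℝ) 1 := ⟨h0, by linarith⟩
  have hβ : α + (β - α) * s ∈ Icc (0:ℝ) 1 := ⟨by nlinarith [hs.1], by nlinarith [hs.1, hs.2]⟩
  unfold prim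
  rw [intervalIntegral.integral_const_mul]
  have := intervalIntegral.smul_integral_comp_add_mul (a := 0) (b := s) f (β - α) α
  rw [smul_eq_mul] at this
  rw [this, mul_zero, add_zero, add_assoc, intervalIntegral.integral_add_adjacent_intervals
    (sub_ii hf (by simp) hα) (sub_ii hf hα hβ)]

theorem IsMin.sub {a : ℝ} {u w : ℝ → ℝ} (h : IsMin E F G a u w) {α β : ℝ} (h0 : 0 ≤ α)
    (hab : α < β) (h1 : β ≤ 1) (hα : prim (-1) w α = -1) (hβ : prim (-1) w β = 1) :
    1 ≤ β - α := by
  have hu := h.adm.hu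
  have hw := h.adm.hw
  have hpos : 0 < β - α := by linarith
  have py : ∀ s ∈ Icc (0:ℝ) 1, prim (-1) (fun s => (β - α) * w (α + (β - α) * s)) s
      = prim (-1) w (α + (β - α) * s) := fun s hs => by
    have := prim_aff (-1) (memLp_ii hw) h0 hab h1 hs
    rwa [hα] at this
  have hA : Adm (fun s => (β - α) * u (α + (β - α) * s)) (fun s => (β - α) * w (α + (β - α) * s)) := by
    refine ⟨comp_aff_memLp hu h0 hab h1, comp_aff_memLp hw h0 hab h1, fun t ht => ?_, ?_⟩
    · rw [py t ht]
      exact h.adm.hmem _ ⟨by nlinarith [ht.1], by nlinarith [ht.1, ht.2]⟩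
    · rw [py 1 (by simp), mul_one, add_sub_cancel, hβ]
  have hle := h.le (prim a u α) _ _ hA
  let L : ℝ → ℝ := fun t => Lag E F G (prim a u t) (prim (-1) w t) (u t) (w t)
  have hLi : IntervalIntegrable L volume 0 1 := ii_iff.2 (Lag_int h.met a (-1) hu hw hu hw)
  have e1 : en E F G (prim a u α) (fun s => (β - α) * u (α + (β - α) * s))
      (fun s => (β - α) * w (α + (β - α) * s)) = (β - α) * ∫ t in α..β, L t := by
    have := intervalIntegral.smul_integral_comp_add_mul (a := 0) (b := 1) L (β - α) α
    rw [smul_eq_mul, mul_zero, add_zero, mul_one, add_sub_cancel] at this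
    rw [← this, iint, ← mul_assoc, ← integral_const_mul]
    apply integral_congr_ae
    apply ae_mu
    intro t ht
    simp only [L, py t ht, prim_aff a (memLp_ii hu) h0 hab h1 ht, Lag]
    ring
  have e2 : ∫ t in α..β, L t ≤ en E F G a u w := by
    have : en E F G a u w = ∫ t in (0:ℝ)..1, L t := (iint L).symm
    rw [this]
    exact intervalIntegral.integral_mono_interval h0 hab.le h1
      (Eventually.of_forall fun t => Lag_nonneg h.met _ _ _ _) hLi
  rw [e1] at hle
  have := h.en_pos
  by_contra hc
  push Not at hc
  nlinarith

theorem IsMin.interior {a : ℝ} {u w : ℝ → ℝ} (h : IsMin E F G a u w) {t : ℝ} (ht : t ∈ Ioo (0:ℝ) 1) :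
    prim (-1) w t ∈ Ioo (-1:ℝ) 1 := by
  have h1 := h.adm.hmem t ⟨ht.1.le, ht.2.le⟩
  have h0 : prim (-1) w 0 = -1 := by simp [prim]
  refine ⟨lt_of_le_of_ne h1.1 fun he => ?_, lt_of_le_of_ne h1.2 fun he => ?_⟩
  · have := h.sub ht.1.le ht.2 le_rfl he.symm h.adm.hend
    linarith [ht.1]
  · have := h.sub le_rfl ht.1 ht.2.le h0 he
    linarith [ht.2]

end TB


namespace TB
open MeasureTheory Set Filter Topology

/-- Integration by parts with an integrable function. -/
theorem ibp {q ζ : ℝ → ℝ} (b : ℝ) (hq : Integrable q mu) (hζ : Continuous ζ) :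
    ∫ t, q t * prim b ζ t ∂mu = b * ∫ t, q t ∂mu + (∫ t, q t ∂mu) * (∫ t, ζ t ∂mu) -
      ∫ t, prim 0 q t * ζ t ∂mu := by
  have hq' := ii_iff.2 hq
  have hz' : IntervalIntegrable ζ volume 0 1 := hζ.intervalIntegrable 0 1
  have a1 := hq'.absolutelyContinuousOnInterval_intervalIntegral (c := 0) (by simp)
  have a2 := hz'.absolutelyContinuousOnInterval_intervalIntegral (c := 0) (by simp)
  have key := a1.integral_deriv_mul_eq_sub a2
  have d1 := hq'.ae_hasDerivAt_integral
  have key2 : ∫ t in (0:ℝ)..1, (q t * (∫ s in (0:ℝ)..t, ζ s) + prim 0 q t * ζ t) =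
      (∫ t, q t ∂mu) * (∫ t, ζ t ∂mu) := by
    rw [← iint, ← iint]
    rw [intervalIntegral.integral_same, zero_mul, sub_zero] at key
    rw [← key]
    apply intervalIntegral.integral_congr_ae
    filter_upwards [d1] with t ht ht'
    have h1 := (ht (uIoc_subset_uIcc ht') 0 (by simp)).deriv
    have h2 := (hζ.integral_hasStrictDerivAt 0 t).hasDerivAt.deriv
    rw [h1, h2]; simp [prim]
  have i1 : Integrable (fun t => prim 0 q t * ζ t) mu := by
    have := (cont_memLp (e := fun t => prim 0 q t * ζ t) ((prim_cont 0 hq').mul hζ.continuousOn) 1)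
    exact memLp_one_iff_integrable.1 this
  have i2 : Integrable (fun t => q t * (∫ s in (0:ℝ)..t, ζ s)) mu := by
    exact ii_iff.1 (hq'.mul_continuousOn (intervalIntegral.continuous_primitive (fun a b => hζ.intervalIntegrable a b) 0).continuousOn)
  rw [iint, integral_add i2 i1] at key2
  have : ∀ t, q t * prim b ζ t = b * q t + q t * (∫ s in (0:ℝ)..t, ζ s) := fun t => by
    unfold prim; ring
  simp_rw [this]
  rw [integral_add (hq.const_mul b) i2, integral_const_mul]
  linarith

theorem dbr_y {p q : ℝ → ℝ} (hp : Integrable p mu) (hq : Integrable q mu)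
    (h : ∀ ζ : ℝ → ℝ, Continuous ζ → HasCompactSupport ζ → tsupport ζ ⊆ Ioo 0 1 →
      ∫ t, ζ t ∂mu = 0 → ∫ t, (2 * (p t * ζ t) + q t * prim 0 ζ t) ∂mu = 0) :
    ∃ c, ∀ᵐ t ∂mu, p t = prim c (fun s => q s / 2) t := by
  have hq' := ii_iff.2 hq
  let R : ℝ → ℝ := fun t => 2 * p t - prim 0 q t
  have iQ : Integrable (prim 0 q) mu := memLp_one_iff_integrable.1 (cont_memLp (prim_cont 0 hq') 1)
  have hR : Integrable R mu := (hp.const_mul 2).sub iQ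
  have mulI : ∀ f ζ : ℝ → ℝ, Integrable f mu → Continuous ζ → Integrable (fun t => f t * ζ t) mu := by
    intro f ζ hf hζ
    exact ii_iff.1 ((ii_iff.2 hf).mul_continuousOn hζ.continuousOn)
  have h2 : ∀ ζ : ℝ → ℝ, Continuous ζ → HasCompactSupport ζ → tsupport ζ ⊆ Ioo 0 1 →
      ∫ t, ζ t ∂mu = 0 → ∫ t, R t * ζ t ∂mu = 0 := by
    intro ζ hc hs ht h0
    have e := h ζ hc hs ht h0
    have hpr : Continuous (prim 0 ζ) := by
      unfold prim
      exact continuous_const.add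
        (intervalIntegral.continuous_primitive (fun a b => hc.intervalIntegrable a b) 0)
    rw [integral_add ((mulI p ζ hp hc).const_mul 2) (mulI q _ hq hpr), ibp 0 hq hc, h0,
      integral_const_mul] at e
    have : ∀ t, R t * ζ t = 2 * (p t * ζ t) - prim 0 q t * ζ t := fun t => by simp only [R]; ring
    simp_rw [this]
    rw [integral_sub ((mulI p ζ hp hc).const_mul 2) (mulI _ ζ iQ hc), integral_const_mul]
    linarith
  -- a bump of total mass one
  obtain ⟨θ, hθc, hθs, hθt, hθ1⟩ : ∃ θ : ℝ → ℝ, Continuous θ ∧ HasCompactSupport θ ∧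
      tsupport θ ⊆ Ioo 0 1 ∧ ∫ t, θ t ∂mu = 1 := by
    let B : ContDiffBump (1/2 : ℝ) := ⟨1/8, 1/4, by norm_num, by norm_num⟩
    refine ⟨B.normed volume, B.continuous_normed, B.hasCompactSupport_normed, ?_, ?_⟩
    · rw [B.tsupport_normed_eq, Real.closedBall_eq_Icc]
      exact fun x hx => ⟨by norm_num at hx; linarith [hx.1], by norm_num at hx; linarith [hx.2]⟩
    · refine (setIntegral_eq_integral_of_forall_compl_eq_zero ?_).trans B.integral_normed
      intro x hx
      by_contra hne
      have : x ∈ tsupport (B.normed volume) := subset_tsupport _ hne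
      rw [B.tsupport_normed_eq, Real.closedBall_eq_Icc] at this
      apply hx
      norm_num at this
      exact ⟨by linarith [this.1], by linarith [this.2]⟩
  let c := ∫ t, R t * θ t ∂mu
  have h3 := isOpen_Ioo.ae_eq_zero_of_integral_contDiff_smul_eq_zero (μ := volume) (f := fun t => R t - c) 
      (U := Ioo (0:ℝ) 1) ?_ ?_
  · refine ⟨c / 2, ?_⟩
    have h4 : ∀ᵐ t ∂mu, t ∈ Ioo (0:ℝ) 1 → R t - c = 0 := ae_restrict_of_ae h3
    have h5 : ∀ᵐ t ∂mu, t ≠ 1 := by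
      apply ae_restrict_of_ae; simp [ae_iff, measure_singleton]
    filter_upwards [h4, h5, ae_restrict_mem measurableSet_Ioc] with t h4 h5 h6
    have := h4 ⟨h6.1, lt_of_le_of_ne h6.2 h5⟩
    simp only [R, prim] at this
    simp only [prim, intervalIntegral.integral_div]
    linarith
  · have : Integrable (fun t => R t - c) mu := hR.sub (integrable_const c)
    have h7 : IntegrableOn (fun t => R t - c) (Ioo 0 1) volume :=
      IntegrableOn.mono_set (this : IntegrableOn (fun t => R t - c) (Ioc (0:ℝ) 1) volume) Ioo_subset_Ioc_self
    exact h7.locallyIntegrableOn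
  · intro g hg hgs hgt
    have hgc : Continuous g := hg.continuous
    have e0 : ∫ x, g x • (R x - c) = ∫ x, g x * (R x - c) ∂mu := by
      rw [setIntegral_eq_integral_of_forall_compl_eq_zero]; · rfl
      intro x hx
      have : g x = 0 := by
        by_contra hne
        exact hx (Ioo_subset_Ioc_self (hgt (subset_tsupport _ hne)))
      simp [this]
    rw [e0]
    let k := ∫ t, g t ∂mu
    have ig : Integrable g mu := memLp_one_iff_integrable.1 (cont_memLp hgc.continuousOn 1)
    have iθ : Integrable θ mu := memLp_one_iff_integrable.1 (cont_memLp hθc.continuousOn 1)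
    have := h2 (fun t => g t - k * θ t) (hgc.sub (continuous_const.mul hθc)) ?_ ?_ ?_
    · have e1 : ∀ t, R t * (g t - k * θ t) = R t * g t - k * (R t * θ t) := fun t => by ring
      simp_rw [e1] at this
      rw [integral_sub (mulI R g hR hgc) ((mulI R θ hR hθc).const_mul k), integral_const_mul] at this
      have e2 : ∀ t, g t * (R t - c) = R t * g t - c * g t := fun t => by ring
      simp_rw [e2]
      rw [integral_sub (mulI R g hR hgc) (ig.const_mul c), integral_const_mul]
      simp only [c, k] at this ⊢
      linarith
    · exact hgs.sub (hθs.mul_left (f := fun _ => k))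
    · refine (tsupport_sub _ _).trans (union_subset hgt ?_)
      exact (closure_mono (Function.support_mul_subset_right (fun _ => k) θ)).trans hθt
    · rw [integral_sub ig (iθ.const_mul k), integral_const_mul, hθ1]; simp [k]

theorem dbr_x {p q : ℝ → ℝ} (hp : Integrable p mu) (hq : Integrable q mu)
    (h : ∀ (b : ℝ) (ζ : ℝ → ℝ), Continuous ζ → ∫ t, (2 * (p t * ζ t) + q t * prim b ζ t) ∂mu = 0) :
    (∀ᵐ t ∂mu, p t = prim 0 (fun s => q s / 2) t) ∧ ∫ t, q t ∂mu = 0 := by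
  obtain ⟨c, hc⟩ := dbr_y hp hq fun ζ hζ _ _ _ => h 0 ζ hζ
  have h0 : ∫ t, q t ∂mu = 0 := by
    have := h 1 (fun _ => 0) continuous_const
    simpa [prim] using this
  have h1 := h 0 (fun _ => 1) continuous_const
  have i1 : Integrable (fun t => q t * prim 0 (fun _ => (1:ℝ)) t) mu := by
    apply ii_iff.1 ((ii_iff.2 hq).mul_continuousOn _)
    have hpr : prim 0 (fun _ => (1:ℝ)) = fun t => t := by ext t; simp [prim]
    rw [hpr]; exact continuousOn_id
  simp only [mul_one] at h1
  have i2 : Integrable (prim 0 q) mu := 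
    memLp_one_iff_integrable.1 (cont_memLp (prim_cont 0 (ii_iff.2 hq)) 1)
  rw [integral_add (hp.const_mul 2) i1, ibp 0 hq continuous_const, h0, integral_const_mul] at h1
  have h2 : ∫ t, p t ∂mu = ∫ t, (c + prim 0 q t / 2) ∂mu := by
    apply integral_congr_ae
    filter_upwards [hc] with t ht
    rw [ht]; simp only [prim, intervalIntegral.integral_div]; ring
  rw [integral_add (integrable_const c) (i2.div_const 2), integral_div] at h2
  simp at h1 h2
  have : c = 0 := by linarith
  exact ⟨by rwa [this] at hc, h0⟩

end TB


namespace TB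
open MeasureTheory Set Filter Topology

variable {E F G : ℝ × ℝ → ℝ}

theorem fderiv_pd (f : ℝ × ℝ → ℝ) (p : ℝ × ℝ) (a b : ℝ) :
    fderiv ℝ f p (a, b) = pdx f p * a + pdy f p * b := by
  have : ((a, b) : ℝ × ℝ) = a • (1, 0) + b • (0, 1) := by simp
  rw [this, map_add, map_smul, map_smul]
  simp only [pdx, pdy, smul_eq_mul]; ring

theorem line {f : ℝ × ℝ → ℝ} (hf : Differentiable ℝ f) {X Y : ℝ → ℝ} {X' Y' s : ℝ}
    (hX : HasDerivAt X X' s) (hY : HasDerivAt Y Y' s) :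
    HasDerivAt (fun s => f (X s, Y s)) (pdx f (X s, Y s) * X' + pdy f (X s, Y s) * Y') s := by
  have := (hf (X s, Y s)).hasFDerivAt.comp_hasDerivAt s (hX.prodMk hY)
  rw [fderiv_pd] at this
  exact this

theorem pdx_smooth {f : ℝ × ℝ → ℝ} (hf : ContDiff ℝ (⊤ : ℕ∞) f) : ContDiff ℝ (⊤ : ℕ∞) (pdx f) := by
  have := hf.fderiv_right (m := (⊤ : ℕ∞)) (by norm_cast)
  exact this.clm_apply contDiff_const

theorem pdy_smooth {f : ℝ × ℝ → ℝ} (hf : ContDiff ℝ (⊤ : ℕ∞) f) : ContDiff ℝ (⊤ : ℕ∞) (pdy f) := by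
  have := hf.fderiv_right (m := (⊤ : ℕ∞)) (by norm_cast)
  exact this.clm_apply contDiff_const

theorem smooth_diff {f : ℝ × ℝ → ℝ} (hf : ContDiff ℝ (⊤ : ℕ∞) f) : Differentiable ℝ f :=
  hf.differentiable (by simp)

theorem Lag_deriv (h : Met E F G) {X Y U W : ℝ → ℝ} {X' Y' U' W' s : ℝ}
    (hX : HasDerivAt X X' s) (hY : HasDerivAt Y Y' s)
    (hU : HasDerivAt U U' s) (hW : HasDerivAt W W' s) :
    HasDerivAt (fun s => Lag E F G (X s) (Y s) (U s) (W s))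
      (Lag (pdx E) (pdx F) (pdx G) (X s) (Y s) (U s) (W s) * X'
        + Lag (pdy E) (pdy F) (pdy G) (X s) (Y s) (U s) (W s) * Y'
        + 2 * ((E (X s, Y s) * U s + F (X s, Y s) * W s) * U'
        + (F (X s, Y s) * U s + G (X s, Y s) * W s) * W')) s := by
  have e1 := line (smooth_diff h.hE) hX hY
  have e2 := line (smooth_diff h.hF) hX hY
  have e3 := line (smooth_diff h.hG) hX hY
  have := (((e1.mul hU).mul hU).add (((e2.mul hU).mul hW).const_mul 2)).add ((e3.mul hW).mul hW)
  refine this.congr_deriv ?_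
  simp only [Lag, Pi.mul_apply]
  ring

theorem Lag_int' {E F G : ℝ × ℝ → ℝ} (hE : Continuous E) (hF : Continuous F) (hG : Continuous G)
    {X Y U W : ℝ → ℝ}
    (hX : ContinuousOn X (Icc 0 1)) (hY : ContinuousOn Y (Icc 0 1))
    (hU : MemLp U 2 mu) (hW : MemLp W 2 mu) :
    Integrable (fun t => Lag E F G (X t) (Y t) (U t) (W t)) mu :=
  ((cmul_int (hE.comp_continuousOn (hX.prodMk hY)) hU hU).add
    ((cmul_int (hF.comp_continuousOn (hX.prodMk hY)) hU hW).const_mul 2)).add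
    (cmul_int (hG.comp_continuousOn (hX.prodMk hY)) hW hW)

theorem bdd_pos {f : ℝ × ℝ → ℝ} (hf : Continuous f) {x y η1 η2 : ℝ → ℝ}
    (hx : ContinuousOn x (Icc 0 1)) (hy : ContinuousOn y (Icc 0 1))
    (h1 : ContinuousOn η1 (Icc 0 1)) (h2 : ContinuousOn η2 (Icc 0 1)) :
    ∃ M, 0 ≤ M ∧ ∀ s ∈ Icc (-1:ℝ) 1, ∀ t ∈ Icc (0:ℝ) 1, |f (x t + s * η1 t, y t + s * η2 t)| ≤ M := by
  have hc : IsCompact (Icc (-1:ℝ) 1 ×ˢ Icc (0:ℝ) 1) := isCompact_Icc.prod isCompact_Icc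
  have m2 : MapsTo (Prod.snd : ℝ × ℝ → ℝ) (Icc (-1:ℝ) 1 ×ˢ Icc (0:ℝ) 1) (Icc 0 1) := fun p hp => hp.2
  have c2 : ContinuousOn (Prod.snd : ℝ × ℝ → ℝ) (Icc (-1:ℝ) 1 ×ˢ Icc (0:ℝ) 1) := continuous_snd.continuousOn
  have c1 : ContinuousOn (Prod.fst : ℝ × ℝ → ℝ) (Icc (-1:ℝ) 1 ×ˢ Icc (0:ℝ) 1) := continuous_fst.continuousOn
  have := hc.exists_bound_of_continuousOn (f := fun p : ℝ × ℝ => f (x p.2 + p.1 * η1 p.2, y p.2 + p.1 * η2 p.2))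
    (hf.comp_continuousOn (((hx.comp c2 m2).add (c1.mul (h1.comp c2 m2))).prodMk
      ((hy.comp c2 m2).add (c1.mul (h2.comp c2 m2)))))
  obtain ⟨M, hM⟩ := this
  exact ⟨M, (norm_nonneg _).trans (hM (0, 0) (by simp)), fun s hs t ht => hM (s, t) ⟨hs, ht⟩⟩

theorem Lag_bd {E F G : ℝ × ℝ → ℝ} {x y u w M S : ℝ} (hE : |E (x, y)| ≤ M) (hF : |F (x, y)| ≤ M)
    (hG : |G (x, y)| ≤ M) (hS : |u| + |w| ≤ S) : |Lag E F G x y u w| ≤ M * S ^ 2 := by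
  have hM : 0 ≤ M := (abs_nonneg _).trans hE
  have hu := abs_nonneg u
  have hw := abs_nonneg w
  calc |Lag E F G x y u w| ≤ |E (x,y) * u * u| + |2 * (F (x,y) * u * w)| + |G (x,y) * w * w| := by
        unfold Lag
        exact (abs_add_le _ _).trans (add_le_add_left (abs_add_le _ _) _)
    _ = |E (x,y)| * |u| * |u| + 2 * (|F (x,y)| * |u| * |w|) + |G (x,y)| * |w| * |w| := by
        simp only [abs_mul]; norm_num
    _ ≤ M * |u| * |u| + 2 * (M * |u| * |w|) + M * |w| * |w| := by gcongr
    _ = M * (|u| + |w|) ^ 2 := by ring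
    _ ≤ M * S ^ 2 := by gcongr

theorem lin_bd {e f g u w z1 z2 M N S : ℝ} (hE : |e| ≤ M) (hF : |f| ≤ M)
    (hG : |g| ≤ M) (hS : |u| + |w| ≤ S) (h1 : |z1| ≤ N) (h2 : |z2| ≤ N) :
    |2 * ((e * u + f * w) * z1 + (f * u + g * w) * z2)| ≤ 4 * (M * N) * S := by
  have hM : 0 ≤ M := (abs_nonneg _).trans hE
  have hN : 0 ≤ N := (abs_nonneg _).trans h1
  have hu := abs_nonneg u
  have hw := abs_nonneg w
  calc _ ≤ 2 * ((|e| * |u| + |f| * |w|) * |z1| + (|f| * |u| + |g| * |w|) * |z2|) := by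
        rw [abs_mul, abs_two]
        gcongr
        refine (abs_add_le _ _).trans ?_
        rw [abs_mul, abs_mul]
        gcongr <;> refine (abs_add_le _ _).trans ?_ <;> rw [abs_mul, abs_mul]
    _ ≤ 2 * ((M * |u| + M * |w|) * N + (M * |u| + M * |w|) * N) := by gcongr
    _ = 4 * (M * N) * (|u| + |w|) := by ring
    _ ≤ _ := by gcongr

theorem prim_add {u v : ℝ → ℝ} (a b ε : ℝ) (hu : IntervalIntegrable u volume 0 1)
    (hv : IntervalIntegrable v volume 0 1) {t : ℝ} (ht : t ∈ Icc (0:ℝ) 1) :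
    prim (a + ε * b) (fun s => u s + ε * v s) t = prim a u t + ε * prim b v t := by
  unfold prim
  rw [intervalIntegral.integral_add (sub_ii hu (by simp) ht) ((sub_ii hv (by simp) ht).const_mul ε),
    intervalIntegral.integral_const_mul]
  ring

theorem first_var {a : ℝ} {u w : ℝ → ℝ} (h : IsMin E F G a u w) (b : ℝ) {ζ1 ζ2 : ℝ → ℝ}
    (h1 : Continuous ζ1) (h2 : Continuous ζ2) (h0 : prim 0 ζ2 1 = 0)
    (hin : ∀ᶠ ε in 𝓝 (0:ℝ), ∀ t ∈ Icc (0:ℝ) 1, prim (-1) w t + ε * prim 0 ζ2 t ∈ Icc (-1:ℝ) 1) :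
    ∫ t, (Lag (pdx E) (pdx F) (pdx G) (prim a u t) (prim (-1) w t) (u t) (w t) * prim b ζ1 t
        + Lag (pdy E) (pdy F) (pdy G) (prim a u t) (prim (-1) w t) (u t) (w t) * prim 0 ζ2 t
        + 2 * ((E (prim a u t, prim (-1) w t) * u t + F (prim a u t, prim (-1) w t) * w t) * ζ1 t
        + (F (prim a u t, prim (-1) w t) * u t + G (prim a u t, prim (-1) w t) * w t) * ζ2 t)) ∂mu
      = 0 := by
  have hm := h.met
  have hu := h.adm.hu
  have hw := h.adm.hw
  have cx := prim_cont a (memLp_ii hu)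
  have cy := prim_cont (-1) (memLp_ii hw)
  have i1 : IntervalIntegrable ζ1 volume 0 1 := h1.intervalIntegrable 0 1
  have i2 : IntervalIntegrable ζ2 volume 0 1 := h2.intervalIntegrable 0 1
  have c1 := prim_cont b i1
  have c2 := prim_cont 0 i2
  have m1 : MemLp ζ1 2 mu := cont_memLp h1.continuousOn 2
  have m2 : MemLp ζ2 2 mu := cont_memLp h2.continuousOn 2
  let f : ℝ → ℝ → ℝ := fun ε t => Lag E F G (prim a u t + ε * prim b ζ1 t)
    (prim (-1) w t + ε * prim 0 ζ2 t) (u t + ε * ζ1 t) (w t + ε * ζ2 t)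
  let f' : ℝ → ℝ → ℝ := fun ε t =>
    Lag (pdx E) (pdx F) (pdx G) (prim a u t + ε * prim b ζ1 t)
      (prim (-1) w t + ε * prim 0 ζ2 t) (u t + ε * ζ1 t) (w t + ε * ζ2 t) * prim b ζ1 t
    + Lag (pdy E) (pdy F) (pdy G) (prim a u t + ε * prim b ζ1 t)
      (prim (-1) w t + ε * prim 0 ζ2 t) (u t + ε * ζ1 t) (w t + ε * ζ2 t) * prim 0 ζ2 t
    + 2 * ((E (prim a u t + ε * prim b ζ1 t, prim (-1) w t + ε * prim 0 ζ2 t) * (u t + ε * ζ1 t)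
        + F (prim a u t + ε * prim b ζ1 t, prim (-1) w t + ε * prim 0 ζ2 t) * (w t + ε * ζ2 t)) * ζ1 t
      + (F (prim a u t + ε * prim b ζ1 t, prim (-1) w t + ε * prim 0 ζ2 t) * (u t + ε * ζ1 t)
        + G (prim a u t + ε * prim b ζ1 t, prim (-1) w t + ε * prim 0 ζ2 t) * (w t + ε * ζ2 t)) * ζ2 t)
  have fint : ∀ ε, Integrable (f ε) mu := fun ε =>
    Lag_int' hm.hE.continuous hm.hF.continuous hm.hG.continuous
      (cx.add (continuousOn_const.mul c1)) (cy.add (continuousOn_const.mul c2))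
      (hu.add (m1.const_mul ε)) (hw.add (m2.const_mul ε))
  -- bounds
  have bd : ∃ M, ∀ s ∈ Icc (-1:ℝ) 1, ∀ t ∈ Icc (0:ℝ) 1, ∀ φ ∈ [E, F, G, pdx E, pdx F, pdx G, pdy E, pdy F, pdy G],
      |φ (prim a u t + s * prim b ζ1 t, prim (-1) w t + s * prim 0 ζ2 t)| ≤ M := by
    let Φ : ℝ × ℝ → ℝ := fun p => |E p| + |F p| + |G p| + |pdx E p| + |pdx F p| + |pdx G p|
      + |pdy E p| + |pdy F p| + |pdy G p|
    have hΦ : Continuous Φ := by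
      have a1 := hm.hE.continuous
      have a2 := hm.hF.continuous
      have a3 := hm.hG.continuous
      have a4 := (pdx_smooth hm.hE).continuous
      have a5 := (pdx_smooth hm.hF).continuous
      have a6 := (pdx_smooth hm.hG).continuous
      have a7 := (pdy_smooth hm.hE).continuous
      have a8 := (pdy_smooth hm.hF).continuous
      have a9 := (pdy_smooth hm.hG).continuous
      fun_prop
    obtain ⟨M, _, hM⟩ := bdd_pos hΦ cx cy c1 c2
    refine ⟨M, fun s hs t ht φ hφ => ?_⟩
    have hb := (le_abs_self _).trans (hM s hs t ht)
    simp only [Φ] at hb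
    generalize ((prim a u t + s * prim b ζ1 t, prim (-1) w t + s * prim 0 ζ2 t) : ℝ × ℝ) = p at hb ⊢
    have n1 := abs_nonneg (E p)
    have n2 := abs_nonneg (F p)
    have n3 := abs_nonneg (G p)
    have n4 := abs_nonneg (pdx E p)
    have n5 := abs_nonneg (pdx F p)
    have n6 := abs_nonneg (pdx G p)
    have n7 := abs_nonneg (pdy E p)
    have n8 := abs_nonneg (pdy F p)
    have n9 := abs_nonneg (pdy G p)
    simp only [List.mem_cons, List.not_mem_nil, or_false] at hφ
    rcases hφ with rfl | rfl | rfl | rfl | rfl | rfl | rfl | rfl | rfl <;> linarith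
  obtain ⟨M, hM⟩ := bd
  obtain ⟨N, hN⟩ : ∃ N, ∀ t ∈ Icc (0:ℝ) 1, |ζ1 t| ≤ N ∧ |ζ2 t| ≤ N ∧ |prim b ζ1 t| ≤ N ∧ |prim 0 ζ2 t| ≤ N := by
    obtain ⟨N1, p1, q1⟩ := cont_bdd h1.continuousOn
    obtain ⟨N2, p2, q2⟩ := cont_bdd h2.continuousOn
    obtain ⟨N3, p3, q3⟩ := cont_bdd c1
    obtain ⟨N4, p4, q4⟩ := cont_bdd c2
    refine ⟨N1 + N2 + N3 + N4, fun t ht => ?_⟩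
    have := q1 t ht
    have := q2 t ht
    have := q3 t ht
    have := q4 t ht
    refine ⟨?_, ?_, ?_, ?_⟩ <;> linarith
  let S : ℝ → ℝ := fun t => |u t| + |w t| + 2 * N
  have mS : MemLp S 2 mu := (hu.abs.add hw.abs).add (memLp_const (2 * N))
  have key := hasDerivAt_integral_of_dominated_loc_of_deriv_le (μ := mu) (F := f) (F' := f')
    (x₀ := 0) (s := Icc (-1) 1) (bound := fun t => 2 * (M * N) * S t ^ 2 + 4 * (M * N) * S t)
    (Icc_mem_nhds (by norm_num) (by norm_num))
    (Eventually.of_forall fun ε => (fint ε).aestronglyMeasurable) (fint 0) ?_ ?_ ?_ ?_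
  · have hd := key.2
    have hmin : IsLocalMin (fun ε => ∫ t, f ε t ∂mu) 0 := by
      filter_upwards [hin] with ε hε
      have e0 : ∀ c ζ, prim c (fun s => ζ s + 0) = prim c ζ := fun c ζ => by simp
      have e1 : ∫ t, f 0 t ∂mu = en E F G a u w := by
        simp [f, en]
      have e2 : ∫ t, f ε t ∂mu = en E F G (a + ε * b) (fun t => u t + ε * ζ1 t) (fun t => w t + ε * ζ2 t) := by
        apply integral_congr_ae
        apply ae_mu
        intro t ht
        have := prim_add (-1) 0 ε (memLp_ii hw) i2 ht
        rw [mul_zero, add_zero] at this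
        simp only [f, prim_add a b ε (memLp_ii hu) i1 ht, this]
      rw [e1, e2]
      have py : ∀ t ∈ Icc (0:ℝ) 1, prim (-1) (fun t => w t + ε * ζ2 t) t = prim (-1) w t + ε * prim 0 ζ2 t := by
        intro t ht
        have := prim_add (-1) 0 ε (memLp_ii hw) i2 ht
        rwa [mul_zero, add_zero] at this
      refine h.le _ _ _ ⟨hu.add (m1.const_mul ε), hw.add (m2.const_mul ε), fun t ht => ?_, ?_⟩
      · rw [py t ht]; exact hε t ht
      · rw [py 1 (by simp), h0, h.adm.hend]; simp
    have := hmin.hasDerivAt_eq_zero hd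
    simpa [f'] using this
  · have l1 := Lag_int' (pdx_smooth hm.hE).continuous (pdx_smooth hm.hF).continuous
      (pdx_smooth hm.hG).continuous cx cy hu hw
    have l2 := Lag_int' (pdy_smooth hm.hE).continuous (pdy_smooth hm.hF).continuous
      (pdy_smooth hm.hG).continuous cx cy hu hw
    have k1 := (comp_cont hm.hE.continuous a (-1) hu hw)
    have k2 := (comp_cont hm.hF.continuous a (-1) hu hw)
    have k3 := (comp_cont hm.hG.continuous a (-1) hu hw)
    simp only [f', zero_mul, add_zero]
    exact ((l1.aestronglyMeasurable.mul (cont_aesm c1)).add (l2.aestronglyMeasurable.mul (cont_aesm c2))).add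
      (((((cont_aesm k1).mul hu.1).add ((cont_aesm k2).mul hw.1)).mul m1.1).add
        ((((cont_aesm k2).mul hu.1).add ((cont_aesm k3).mul hw.1)).mul m2.1) |>.const_mul 2)
  · apply ae_mu
    intro t ht ε hε
    obtain ⟨n1, n2, n3, n4⟩ := hN t ht
    have hMM := hM ε hε t ht
    have hb := abs_le.2 hε
    have hN0 : 0 ≤ N := (abs_nonneg _).trans n1
    have hS : |u t + ε * ζ1 t| + |w t + ε * ζ2 t| ≤ S t := by
      have a1 : |u t + ε * ζ1 t| ≤ |u t| + N := by
        refine (abs_add_le _ _).trans ?_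
        rw [abs_mul]
        nlinarith [abs_nonneg ε, abs_nonneg (ζ1 t)]
      have a2 : |w t + ε * ζ2 t| ≤ |w t| + N := by
        refine (abs_add_le _ _).trans ?_
        rw [abs_mul]
        nlinarith [abs_nonneg ε, abs_nonneg (ζ2 t)]
      simp only [S]; linarith
    have b1 := Lag_bd (hMM (pdx E) (by simp)) (hMM (pdx F) (by simp)) (hMM (pdx G) (by simp)) hS
    have b2 := Lag_bd (hMM (pdy E) (by simp)) (hMM (pdy F) (by simp)) (hMM (pdy G) (by simp)) hS
    have b3 := lin_bd (hMM E (by simp)) (hMM F (by simp)) (hMM G (by simp)) hS n1 n2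
    have hM0 : 0 ≤ M := (abs_nonneg _).trans (hMM E (by simp))
    rw [Real.norm_eq_abs]
    refine (abs_add_le _ _).trans ?_
    refine add_le_add ((abs_add_le _ _).trans ?_) b3
    rw [abs_mul, abs_mul]
    have : 0 ≤ M * S t ^ 2 := by positivity
    have g1 := mul_le_mul b1 n3 (abs_nonneg _) this
    have g2 := mul_le_mul b2 n4 (abs_nonneg _) this
    linarith
  · exact (mS.integrable_sq.const_mul _).add ((mS.integrable (by norm_num)).const_mul _)
  · apply ae_mu
    intro t ht ε hε
    have aff : ∀ c d : ℝ, HasDerivAt (fun ε : ℝ => c + ε * d) d ε := fun c d => by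
      simpa using ((hasDerivAt_id ε).mul_const d).const_add c
    exact Lag_deriv hm (aff _ _) (aff _ _) (aff _ _) (aff _ _)

end TB


namespace TB
open MeasureTheory Set Filter Topology

variable {E F G : ℝ × ℝ → ℝ}

theorem el_x {a : ℝ} {u w : ℝ → ℝ} (h : IsMin E F G a u w) :
    (∀ᵐ t ∂mu, E (prim a u t, prim (-1) w t) * u t + F (prim a u t, prim (-1) w t) * w t =
      prim 0 (fun s => Lag (pdx E) (pdx F) (pdx G) (prim a u s) (prim (-1) w s) (u s) (w s) / 2) t) ∧
    ∫ t, Lag (pdx E) (pdx F) (pdx G) (prim a u t) (prim (-1) w t) (u t) (w t) ∂mu = 0 := by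
  have hm := h.met
  have hu := h.adm.hu
  have hw := h.adm.hw
  have cx := prim_cont a (memLp_ii hu)
  have cy := prim_cont (-1) (memLp_ii hw)
  have k1 := (comp_cont hm.hE.continuous a (-1) hu hw)
  have k2 := (comp_cont hm.hF.continuous a (-1) hu hw)
  apply dbr_x
  · exact ((cont_mul_memLp k1 hu).add (cont_mul_memLp k2 hw)).integrable (by norm_num)
  · exact Lag_int' (pdx_smooth hm.hE).continuous (pdx_smooth hm.hF).continuous
      (pdx_smooth hm.hG).continuous cx cy hu hw
  · intro b ζ hζ
    have hz : ∀ t, prim 0 (fun _ => (0:ℝ)) t = 0 := fun t => by simp [prim]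
    have := first_var h b (ζ1 := ζ) (ζ2 := fun _ => 0) hζ continuous_const (hz 1)
      (Eventually.of_forall fun ε t ht => by rw [hz t, mul_zero, add_zero]; exact h.adm.hmem t ht)
    rw [← this]
    congr 1; ext t; rw [hz t]; ring

theorem y_in {a : ℝ} {u w : ℝ → ℝ} (h : IsMin E F G a u w) {ζ : ℝ → ℝ} (hc : Continuous ζ)
    (hs : tsupport ζ ⊆ Ioo 0 1) (h0 : ∫ t, ζ t ∂mu = 0) :
    ∀ᶠ ε in 𝓝 (0:ℝ), ∀ t ∈ Icc (0:ℝ) 1, prim (-1) w t + ε * prim 0 ζ t ∈ Icc (-1:ℝ) 1 := by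
  have cy := prim_cont (-1) (memLp_ii h.adm.hw)
  have n0 : (0:ℝ) ∉ tsupport ζ := fun hh => lt_irrefl _ (hs hh).1
  have n1 : (1:ℝ) ∉ tsupport ζ := fun hh => lt_irrefl _ (hs hh).2
  rw [notMem_tsupport_iff_eventuallyEq] at n0 n1
  obtain ⟨r, hr, hr'⟩ := Metric.eventually_nhds_iff.1 n0
  obtain ⟨r2, hr2, hr2'⟩ := Metric.eventually_nhds_iff.1 n1
  have ii : ∀ a b, IntervalIntegrable ζ volume a b := fun a b => hc.intervalIntegrable a b
  have z0 : ∀ t ∈ Icc (0:ℝ) 1, t < r → prim 0 ζ t = 0 := by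
    intro t ht htr
    unfold prim
    rw [zero_add, intervalIntegral.integral_congr (g := fun _ => 0)]; · simp
    intro s hs
    rw [uIcc_of_le ht.1] at hs
    apply hr'
    rw [Real.dist_eq, abs_of_nonneg] <;> linarith [hs.1, hs.2]
  have z1 : ∀ t ∈ Icc (0:ℝ) 1, 1 - r2 < t → prim 0 ζ t = 0 := by
    intro t ht htr
    unfold prim
    rw [← iint, ← intervalIntegral.integral_add_adjacent_intervals (ii 0 t) (ii t 1)] at h0
    have : ∫ s in t..1, ζ s = 0 := by
      rw [intervalIntegral.integral_congr (g := fun _ => 0)]; · simp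
      intro s hs
      rw [uIcc_of_le ht.2] at hs
      apply hr2'
      rw [Real.dist_eq, abs_of_nonpos] <;> linarith [hs.1, hs.2]
    linarith
  obtain ⟨N, hN0, hN⟩ := cont_bdd (prim_cont 0 (ii 0 1))
  let K : Set ℝ := Icc 0 1 ∩ Icc r (1 - r2)
  have hK : IsCompact K := isCompact_Icc.inter isCompact_Icc
  obtain ⟨c, hc0, hcK⟩ : ∃ c, 0 < c ∧ ∀ t ∈ K, -1 + c ≤ prim (-1) w t ∧ prim (-1) w t ≤ 1 - c := by
    rcases K.eq_empty_or_nonempty with hKe | hKn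
    · exact ⟨1, one_pos, fun t ht => by simp [hKe] at ht⟩
    · obtain ⟨t0, ht0, hmin⟩ := hK.exists_isMinOn hKn
        ((continuousOn_const (c := (1:ℝ)).sub ((cy.abs).mono inter_subset_left)) : ContinuousOn (fun t => 1 - |prim (-1) w t|) K)
      refine ⟨1 - |prim (-1) w t0|, ?_, fun t ht => ?_⟩
      · have := h.interior (t := t0) ⟨by linarith [ht0.2.1], by linarith [ht0.2.2]⟩
        have := abs_lt.2 this
        linarith
      · have h3 : 1 - |prim (-1) w t0| ≤ 1 - |prim (-1) w t| := hmin ht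
        constructor <;> linarith [neg_abs_le (prim (-1) w t), le_abs_self (prim (-1) w t)]
  have hev : ∀ᶠ ε in 𝓝 (0:ℝ), |ε| * N < c := by
    have : Continuous fun ε : ℝ => |ε| * N := by fun_prop
    exact (this.tendsto 0).eventually (gt_mem_nhds (by simpa using hc0))
  filter_upwards [hev] with ε hε t ht
  have hy := h.adm.hmem t ht
  by_cases h1 : t < r
  · rw [z0 t ht h1]; simpa using hy
  by_cases h2 : 1 - r2 < t
  · rw [z1 t ht h2]; simpa using hy
  push Not at h1 h2
  have hk := hcK t ⟨ht, h1, h2⟩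
  have h3 : |ε * prim 0 ζ t| ≤ c := by
    rw [abs_mul]
    exact (mul_le_mul_of_nonneg_left (hN t ht) (abs_nonneg _)).trans hε.le
  have := abs_le.1 h3
  constructor <;> linarith

theorem el_y {a : ℝ} {u w : ℝ → ℝ} (h : IsMin E F G a u w) :
    ∃ c, ∀ᵐ t ∂mu, F (prim a u t, prim (-1) w t) * u t + G (prim a u t, prim (-1) w t) * w t =
      prim c (fun s => Lag (pdy E) (pdy F) (pdy G) (prim a u s) (prim (-1) w s) (u s) (w s) / 2) t := by
  have hm := h.met
  have hu := h.adm.hu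
  have hw := h.adm.hw
  have cx := prim_cont a (memLp_ii hu)
  have cy := prim_cont (-1) (memLp_ii hw)
  have k1 := (comp_cont hm.hF.continuous a (-1) hu hw)
  have k2 := (comp_cont hm.hG.continuous a (-1) hu hw)
  apply dbr_y
  · exact ((cont_mul_memLp k1 hu).add (cont_mul_memLp k2 hw)).integrable (by norm_num)
  · exact Lag_int' (pdy_smooth hm.hE).continuous (pdy_smooth hm.hF).continuous
      (pdy_smooth hm.hG).continuous cx cy hu hw
  · intro ζ hζ _ hs h0
    have hz : ∀ t, prim 0 (fun _ => (0:ℝ)) t = 0 := fun t => by simp [prim]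
    have := first_var h 0 (ζ1 := fun _ => 0) (ζ2 := ζ) continuous_const hζ
      (by unfold prim; rw [iint, h0]; simp) (y_in h hζ hs h0)
    refine Eq.trans ?_ this
    congr 1; ext t; rw [hz t]; ring

theorem prim_congr {u v : ℝ → ℝ} (a : ℝ) (h : u =ᵐ[mu] v) {t : ℝ} (ht : t ∈ Icc (0:ℝ) 1) :
    prim a u t = prim a v t := by
  unfold prim
  congr 1
  apply intervalIntegral.integral_congr_ae
  have := (ae_restrict_iff' measurableSet_Ioc).1 h
  filter_upwards [this] with s hs hs'
  rw [uIoc_of_le ht.1] at hs'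
  exact hs ⟨hs'.1, hs'.2.trans ht.2⟩

theorem IsMin.congr {a : ℝ} {u w u' w' : ℝ → ℝ} (h : IsMin E F G a u w) (hu : u =ᵐ[mu] u')
    (hw : w =ᵐ[mu] w') : IsMin E F G a u' w' := by
  refine ⟨h.met, ⟨h.adm.hu.ae_eq hu, h.adm.hw.ae_eq hw, fun t ht => ?_, ?_⟩, ?_⟩
  · rw [← prim_congr (-1) hw ht]; exact h.adm.hmem t ht
  · rw [← prim_congr (-1) hw (by simp)]; exact h.adm.hend
  · have : en E F G a u' w' = en E F G a u w := by
      apply integral_congr_ae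
      filter_upwards [hu, hw, ae_restrict_mem measurableSet_Ioc] with t h1 h2 h3
      have ht : t ∈ Icc (0:ℝ) 1 := ⟨h3.1.le, h3.2⟩
      rw [prim_congr a hu ht, prim_congr (-1) hw ht, h1, h2]
    rw [this]; exact h.le

theorem ext_cont {f : ℝ → ℝ} (hf : ContinuousOn f (Icc 0 1)) :
    ∃ g : ℝ → ℝ, Continuous g ∧ ∀ t ∈ Icc (0:ℝ) 1, f t = g t := by
  refine ⟨IccExtend zero_le_one ((Icc (0:ℝ) 1).domRestrict f), ?_, fun t ht => ?_⟩
  · exact (continuousOn_iff_continuous_domRestrict.1 hf).Icc_extend'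
  · rw [IccExtend_of_mem _ _ ht]; rfl

theorem regular {a : ℝ} {u w : ℝ → ℝ} (h : IsMin E F G a u w) :
    ∃ u' w', Continuous u' ∧ Continuous w' ∧ IsMin E F G a u' w' := by
  obtain ⟨hx, -⟩ := el_x h
  obtain ⟨c, hy⟩ := el_y h
  have hm := h.met
  have hu := h.adm.hu
  have hw := h.adm.hw
  have cx := prim_cont a (memLp_ii hu)
  have cy := prim_cont (-1) (memLp_ii hw)
  have kE := (comp_cont hm.hE.continuous a (-1) hu hw)
  have kF := (comp_cont hm.hF.continuous a (-1) hu hw)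
  have kG := (comp_cont hm.hG.continuous a (-1) hu hw)
  have cP := prim_cont 0 (ii_iff.2 ((Lag_int' (pdx_smooth hm.hE).continuous (pdx_smooth hm.hF).continuous
      (pdx_smooth hm.hG).continuous cx cy hu hw).div_const 2))
  have cQ := prim_cont c (ii_iff.2 ((Lag_int' (pdy_smooth hm.hE).continuous (pdy_smooth hm.hF).continuous
      (pdy_smooth hm.hG).continuous cx cy hu hw).div_const 2))
  have hD : ∀ t ∈ Icc (0:ℝ) 1, E (prim a u t, prim (-1) w t) * G (prim a u t, prim (-1) w t)
    - F (prim a u t, prim (-1) w t) ^ 2 ≠ 0 := fun t _ => (hm.hpos _).2.ne'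
  obtain ⟨u', cu, hu'⟩ := ext_cont (((kG.mul cP).sub (kF.mul cQ)).div ((kE.mul kG).sub (kF.pow 2)) hD)
  obtain ⟨w', cw, hw'⟩ := ext_cont (((kE.mul cQ).sub (kF.mul cP)).div ((kE.mul kG).sub (kF.pow 2)) hD)
  refine ⟨u', w', cu, cw, h.congr ?_ ?_⟩
  · filter_upwards [hx, hy, ae_mu hu', ae_mu hD] with t h1 h2 h3 h4
    rw [← h3]
    simp only [Pi.mul_apply, Pi.div_apply, Pi.sub_apply, Pi.pow_apply]
    rw [← h1, ← h2]
    rw [eq_div_iff h4]; ring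
  · filter_upwards [hx, hy, ae_mu hw', ae_mu hD] with t h1 h2 h3 h4
    rw [← h3]
    simp only [Pi.mul_apply, Pi.div_apply, Pi.sub_apply, Pi.pow_apply]
    rw [← h1, ← h2]
    rw [eq_div_iff h4]; ring

end TB


namespace TB
open MeasureTheory Set Filter Topology

variable {E F G : ℝ × ℝ → ℝ}

theorem prim_hasDeriv (a : ℝ) {u : ℝ → ℝ} (hu : Continuous u) (t : ℝ) :
    HasDerivAt (prim a u) (u t) t :=
  ((hu.integral_hasStrictDerivAt 0 t).hasDerivAt).const_add a

/-- Regular minimisers together with the geodesic equations. -/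
structure Geo (E F G : ℝ × ℝ → ℝ) (a : ℝ) (x y u w P1 P2 : ℝ → ℝ) : Prop where
  isMin : IsMin E F G a u w
  hx : x = prim a u
  hy : y = prim (-1) w
  hP1 : P1 = fun t => E (x t, y t) * u t + F (x t, y t) * w t
  hP2 : P2 = fun t => F (x t, y t) * u t + G (x t, y t) * w t
  cu : Continuous u
  cw : Continuous w
  dP1 : ∀ t ∈ Ioo (0:ℝ) 1, HasDerivAt P1 (Lag (pdx E) (pdx F) (pdx G) (x t) (y t) (u t) (w t) / 2) t
  dP2 : ∀ t ∈ Ioo (0:ℝ) 1, HasDerivAt P2 (Lag (pdy E) (pdy F) (pdy G) (x t) (y t) (u t) (w t) / 2) t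
  b0 : P1 0 = 0
  b1 : P1 1 = 0

theorem Lag_cont {E F G : ℝ × ℝ → ℝ} (hE : Continuous E) (hF : Continuous F) (hG : Continuous G)
    {X Y U W : ℝ → ℝ} (hX : Continuous X) (hY : Continuous Y) (hU : Continuous U) (hW : Continuous W) :
    Continuous (fun t => Lag E F G (X t) (Y t) (U t) (W t)) := by
  unfold Lag; fun_prop

theorem exists_geo (h : Met E F G) : ∃ a x y u w P1 P2, Geo E F G a x y u w P1 P2 := by
  obtain ⟨a, u0, w0, h1, h2⟩ := exists_min h
  obtain ⟨u, w, cu, cw, hmin⟩ := regular ⟨h, h1, h2⟩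
  obtain ⟨hx, hx0⟩ := el_x hmin
  obtain ⟨c, hy⟩ := el_y hmin
  have cx : Continuous (prim a u) := continuous_iff_continuousAt.2 fun t => (prim_hasDeriv a cu t).continuousAt
  have cy : Continuous (prim (-1) w) := continuous_iff_continuousAt.2 fun t => (prim_hasDeriv (-1) cw t).continuousAt
  have cE := h.hE.continuous
  have cF := h.hF.continuous
  have cG := h.hG.continuous
  have q1 := (Lag_cont (pdx_smooth h.hE).continuous (pdx_smooth h.hF).continuous
      (pdx_smooth h.hG).continuous cx cy cu cw).div_const 2
  have q2 := (Lag_cont (pdy_smooth h.hE).continuous (pdy_smooth h.hF).continuous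
      (pdy_smooth h.hG).continuous cx cy cu cw).div_const 2
  have cq1 : Continuous (prim 0 _) := continuous_iff_continuousAt.2 fun t => (prim_hasDeriv 0 q1 t).continuousAt
  have cq2 : Continuous (prim c _) := continuous_iff_continuousAt.2 fun t => (prim_hasDeriv c q2 t).continuousAt
  have fix : ∀ f g : ℝ → ℝ, Continuous f → Continuous g → f =ᵐ[mu] g → EqOn f g (Icc 0 1) := by
    intro f g hf hg hfg
    refine Measure.eqOn_Icc_of_ae_eq (μ := volume) zero_ne_one ?_ hf.continuousOn hg.continuousOn
    rwa [Measure.restrict_congr_set Ioc_ae_eq_Icc.symm]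
  have e1 := fix _ _ (by fun_prop) cq1 hx
  have e2 := fix _ _ (by fun_prop) cq2 hy
  refine ⟨a, _, _, u, w, _, _, hmin, rfl, rfl, rfl, rfl, cu, cw, ?_, ?_, ?_, ?_⟩
  · intro t ht
    refine (prim_hasDeriv 0 q1 t).congr_of_eventuallyEq ?_
    filter_upwards [Icc_mem_nhds ht.1 ht.2] with s hs using e1 hs
  · intro t ht
    refine (prim_hasDeriv c q2 t).congr_of_eventuallyEq ?_
    filter_upwards [Icc_mem_nhds ht.1 ht.2] with s hs using e2 hs
  · refine (e1 (by simp : (0:ℝ) ∈ Icc (0:ℝ) 1)).trans ?_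
    simp [prim]
  · refine (e1 (by simp : (1:ℝ) ∈ Icc (0:ℝ) 1)).trans ?_
    simp only [prim, intervalIntegral.integral_div]
    rw [iint]
    simp only [prim] at hx0
    rw [hx0]; simp

section
variable {a : ℝ} {x y u w P1 P2 : ℝ → ℝ}

theorem Geo.dx (g : Geo E F G a x y u w P1 P2) (t : ℝ) : HasDerivAt x (u t) t := by rw [g.hx]; exact prim_hasDeriv a g.cu t

theorem Geo.dy (g : Geo E F G a x y u w P1 P2) (t : ℝ) : HasDerivAt y (w t) t := by rw [g.hy]; exact prim_hasDeriv (-1) g.cw t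

theorem Geo.cx (g : Geo E F G a x y u w P1 P2) : Continuous x := continuous_iff_continuousAt.2 fun t => (g.dx t).continuousAt

theorem Geo.cy (g : Geo E F G a x y u w P1 P2) : Continuous y := continuous_iff_continuousAt.2 fun t => (g.dy t).continuousAt

theorem Geo.comp (g : Geo E F G a x y u w P1 P2) {f : ℝ × ℝ → ℝ} (hf : ContDiff ℝ (⊤ : ℕ∞) f) : Continuous (fun t => f (x t, y t)) :=
  hf.continuous.comp (g.cx.prodMk g.cy)

theorem Geo.cP1 (g : Geo E F G a x y u w P1 P2) : Continuous P1 := by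
  have h1 := g.comp g.isMin.met.hE
  have h2 := g.comp g.isMin.met.hF
  rw [g.hP1]; exact (h1.mul g.cu).add (h2.mul g.cw)

theorem Geo.cP2 (g : Geo E F G a x y u w P1 P2) : Continuous P2 := by
  have h1 := g.comp g.isMin.met.hF
  have h2 := g.comp g.isMin.met.hG
  rw [g.hP2]; exact (h1.mul g.cu).add (h2.mul g.cw)

theorem Geo.y0 (g : Geo E F G a x y u w P1 P2) : y 0 = -1 := by rw [g.hy]; simp [prim]

theorem Geo.y1 (g : Geo E F G a x y u w P1 P2) : y 1 = 1 := by rw [g.hy]; exact g.isMin.adm.hend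

theorem Geo.dcomp (g : Geo E F G a x y u w P1 P2) {f : ℝ × ℝ → ℝ} (hf : ContDiff ℝ (⊤ : ℕ∞) f) (t : ℝ) :
    HasDerivAt (fun t => f (x t, y t)) (pdx f (x t, y t) * u t + pdy f (x t, y t) * w t) t :=
  line (smooth_diff hf) (g.dx t) (g.dy t)

theorem Geo.dD (g : Geo E F G a x y u w P1 P2) (t : ℝ) : HasDerivAt (fun t => E (x t, y t) * G (x t, y t) - F (x t, y t) ^ 2)
    ((pdx E (x t, y t) * u t + pdy E (x t, y t) * w t) * G (x t, y t)
      + E (x t, y t) * (pdx G (x t, y t) * u t + pdy G (x t, y t) * w t)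
      - 2 * F (x t, y t) * (pdx F (x t, y t) * u t + pdy F (x t, y t) * w t)) t := by
  have := ((g.dcomp g.isMin.met.hE t).mul (g.dcomp g.isMin.met.hG t)).sub ((g.dcomp g.isMin.met.hF t).pow 2)
  refine this.congr_deriv ?_
  simp

theorem Geo.du (g : Geo E F G a x y u w P1 P2) {t : ℝ} (ht : t ∈ Ioo (0:ℝ) 1) : HasDerivAt u
    ((G (x t, y t) * (Lag (pdx E) (pdx F) (pdx G) (x t) (y t) (u t) (w t) / 2
      - (pdx E (x t, y t) * u t + pdy E (x t, y t) * w t) * u t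
      - (pdx F (x t, y t) * u t + pdy F (x t, y t) * w t) * w t)
      - F (x t, y t) * (Lag (pdy E) (pdy F) (pdy G) (x t) (y t) (u t) (w t) / 2
      - (pdx F (x t, y t) * u t + pdy F (x t, y t) * w t) * u t
      - (pdx G (x t, y t) * u t + pdy G (x t, y t) * w t) * w t))
      / (E (x t, y t) * G (x t, y t) - F (x t, y t) ^ 2)) t := by
  have hm := g.isMin.met
  have hD : ∀ t, E (x t, y t) * G (x t, y t) - F (x t, y t) ^ 2 ≠ 0 := fun t => (hm.hpos _).2.ne'
  have e : u = fun t => (G (x t, y t) * P1 t - F (x t, y t) * P2 t) /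
      (E (x t, y t) * G (x t, y t) - F (x t, y t) ^ 2) := by
    ext s
    rw [eq_div_iff (hD s), g.hP1, g.hP2]; ring
  have := (((g.dcomp hm.hG t).mul (g.dP1 t ht)).sub ((g.dcomp hm.hF t).mul (g.dP2 t ht))).div (g.dD t) (hD t)
  have e2 := this.congr_of_eventuallyEq (f₁ := u) (Eventually.of_forall fun s => congrFun e s)
  refine e2.congr_deriv ?_
  have := hD t
  simp only [g.hP1, g.hP2, Pi.sub_apply, Pi.mul_apply, Lag]
  rw [div_eq_div_iff (pow_ne_zero 2 this) this]
  ring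

theorem Geo.dw (g : Geo E F G a x y u w P1 P2) {t : ℝ} (ht : t ∈ Ioo (0:ℝ) 1) : HasDerivAt w
    ((E (x t, y t) * (Lag (pdy E) (pdy F) (pdy G) (x t) (y t) (u t) (w t) / 2
      - (pdx F (x t, y t) * u t + pdy F (x t, y t) * w t) * u t
      - (pdx G (x t, y t) * u t + pdy G (x t, y t) * w t) * w t)
      - F (x t, y t) * (Lag (pdx E) (pdx F) (pdx G) (x t) (y t) (u t) (w t) / 2
      - (pdx E (x t, y t) * u t + pdy E (x t, y t) * w t) * u t
      - (pdx F (x t, y t) * u t + pdy F (x t, y t) * w t) * w t))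
      / (E (x t, y t) * G (x t, y t) - F (x t, y t) ^ 2)) t := by
  have hm := g.isMin.met
  have hD : ∀ t, E (x t, y t) * G (x t, y t) - F (x t, y t) ^ 2 ≠ 0 := fun t => (hm.hpos _).2.ne'
  have e : w = fun t => (E (x t, y t) * P2 t - F (x t, y t) * P1 t) /
      (E (x t, y t) * G (x t, y t) - F (x t, y t) ^ 2) := by
    ext s
    rw [eq_div_iff (hD s), g.hP1, g.hP2]; ring
  have := (((g.dcomp hm.hE t).mul (g.dP2 t ht)).sub ((g.dcomp hm.hF t).mul (g.dP1 t ht))).div (g.dD t) (hD t)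
  have e2 := this.congr_of_eventuallyEq (f₁ := w) (Eventually.of_forall fun s => congrFun e s)
  refine e2.congr_deriv ?_
  have := hD t
  simp only [g.hP1, g.hP2, Pi.sub_apply, Pi.mul_apply, Lag]
  rw [div_eq_div_iff (pow_ne_zero 2 this) this]
  ring

theorem Geo.cLag (g : Geo E F G a x y u w P1 P2) : Continuous (fun t => Lag E F G (x t) (y t) (u t) (w t)) :=
  Lag_cont g.isMin.met.hE.continuous g.isMin.met.hF.continuous g.isMin.met.hG.continuous g.cx g.cy g.cu g.cw

theorem Geo.dspeed (g : Geo E F G a x y u w P1 P2) {t : ℝ} (ht : t ∈ Ioo (0:ℝ) 1) :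
    HasDerivAt (fun t => Lag E F G (x t) (y t) (u t) (w t)) 0 t := by
  have h1 := Lag_deriv g.isMin.met (g.dx t) (g.dy t) (g.du ht) (g.dw ht)
  have h2 := ((g.dP1 t ht).mul (g.du ht)).add ((g.dP2 t ht).mul (g.dw ht))
  refine h1.congr_deriv ?_
  have hD : E (x t, y t) * G (x t, y t) - F (x t, y t) ^ 2 ≠ 0 := (g.isMin.met.hpos _).2.ne'
  simp only [Lag]
  field_simp
  ring

theorem Geo.speed0 (g : Geo E F G a x y u w P1 P2) {t : ℝ} (ht : t ∈ Icc (0:ℝ) 1) :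
    Lag E F G (x t) (y t) (u t) (w t) = Lag E F G (x 0) (y 0) (u 0) (w 0) := by
  have := intervalIntegral.integral_eq_sub_of_hasDerivAt_of_le ht.1 g.cLag.continuousOn
    (fun s hs => g.dspeed ⟨hs.1, lt_of_lt_of_le hs.2 ht.2⟩) (by simp)
  simp at this
  linarith

theorem Geo.speed (g : Geo E F G a x y u w P1 P2) {t : ℝ} (ht : t ∈ Icc (0:ℝ) 1) :
    Lag E F G (x t) (y t) (u t) (w t) = en E F G a u w := by
  have : en E F G a u w = ∫ t, Lag E F G (x 0) (y 0) (u 0) (w 0) ∂mu := by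
    apply integral_congr_ae
    apply ae_mu
    intro s hs
    have := g.speed0 hs
    simpa only [g.hx, g.hy] using this
  rw [this, g.speed0 ht]; simp

theorem Geo.mem (g : Geo E F G a x y u w P1 P2) {t : ℝ} (ht : t ∈ Icc (0:ℝ) 1) : y t ∈ Icc (-1:ℝ) 1 := by
  rw [g.hy]; exact g.isMin.adm.hmem t ht

theorem Geo.memo (g : Geo E F G a x y u w P1 P2) {t : ℝ} (ht : t ∈ Ioo (0:ℝ) 1) : y t ∈ Ioo (-1:ℝ) 1 := by
  rw [g.hy]; exact g.isMin.interior ht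

theorem Geo.w_ne (g : Geo E F G a x y u w P1 P2) {t : ℝ} (ht : t ∈ Icc (0:ℝ) 1) (h : P1 t = 0) : w t ≠ 0 := by
  intro hw
  have h1 := g.speed ht
  have h2 := g.isMin.en_pos
  rw [g.hP1] at h
  simp only [hw, mul_zero, add_zero] at h
  have h3 : u t = 0 := by
    rcases mul_eq_zero.1 h with h | h
    · exact absurd h (g.isMin.met.hpos _).1.ne'
    · exact h
  simp [Lag, hw, h3] at h1
  linarith

theorem Geo.w0 (g : Geo E F G a x y u w P1 P2) : 0 < w 0 := by
  have h1 := g.w_ne (by simp) g.b0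
  refine lt_of_le_of_ne ?_ h1.symm
  have h2 := (hasDerivAt_iff_tendsto_slope_left_right.1 (g.dy 0)).2
  refine ge_of_tendsto h2 ?_
  filter_upwards [Ioo_mem_nhdsGT (zero_lt_one' ℝ)] with t ht
  rw [slope_def_field, g.y0]
  have := (g.memo ht).1
  apply div_nonneg <;> linarith [ht.1]

theorem Geo.w1 (g : Geo E F G a x y u w P1 P2) : 0 < w 1 := by
  have h1 := g.w_ne (by simp) g.b1
  refine lt_of_le_of_ne ?_ h1.symm
  have h2 := (hasDerivAt_iff_tendsto_slope_left_right.1 (g.dy 1)).1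
  refine ge_of_tendsto h2 ?_
  filter_upwards [Ioo_mem_nhdsLT (zero_lt_one' ℝ)] with t ht
  rw [slope_def_field, g.y1]
  have := (g.memo ht).2
  apply div_nonneg_of_nonpos <;> linarith [ht.2]
end

theorem lin_lower {f : ℝ → ℝ} (hf : Continuous f) (h0 : f 0 = 0) {d : ℝ} (hd : HasDerivAt f d 0) (hd0 : 0 < d)
    (hp : ∀ t, 0 < t → t ≤ 1 → 0 < f t) : ∃ c, 0 < c ∧ ∀ t ∈ Icc (0:ℝ) 1, c * t ≤ f t := by
  have h2 := (hasDerivAt_iff_tendsto_slope_left_right.1 hd).2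
  have h3 := h2.eventually (lt_mem_nhds (half_lt_self hd0))
  obtain ⟨r, hr, hr'⟩ := mem_nhdsGT_iff_exists_Ioo_subset.1 h3
  have hr0 : (0:ℝ) < r := hr
  obtain ⟨k, hk, hk'⟩ : ∃ k, 0 < k ∧ ∀ t ∈ Icc r 1, k ≤ f t := by
    rcases (Icc r 1).eq_empty_or_nonempty with he | hne
    · exact ⟨1, one_pos, fun t ht => by simp [he] at ht⟩
    · obtain ⟨t0, ht0, hm⟩ := isCompact_Icc.exists_isMinOn hne hf.continuousOn
      exact ⟨f t0, hp t0 (by linarith [ht0.1]) ht0.2, fun t ht => hm ht⟩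
  refine ⟨min (d / 2) k, by positivity, fun t ht => ?_⟩
  rcases eq_or_lt_of_le ht.1 with h | h
  · rw [← h, h0]; simp
  rcases lt_or_ge t r with h4 | h4
  · have h5 : d / 2 < slope f 0 t := hr' ⟨h, h4⟩
    rw [slope_def_field, h0, lt_div_iff₀ (by linarith)] at h5
    have := min_le_left (d / 2) k
    nlinarith
  · have := hk' t ⟨h4, ht.2⟩
    have := min_le_right (d / 2) k
    nlinarith [ht.2]

theorem Geo.var_in {a : ℝ} {x y u w P1 P2 : ℝ → ℝ} (g : Geo E F G a x y u w P1 P2) {η : ℝ → ℝ} {N : ℝ}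
    (hN0 : 0 < N) (h1 : ∀ t ∈ Icc (0:ℝ) 1, |η t| ≤ N * t) (h2 : ∀ t ∈ Icc (0:ℝ) 1, |η t| ≤ N * (1 - t)) :
    ∀ᶠ ε in 𝓝 (0:ℝ), ∀ t ∈ Icc (0:ℝ) 1, y t + ε * η t ∈ Icc (-1:ℝ) 1 := by
  have pos1 : ∀ t, 0 < t → t ≤ 1 → 0 < y t + 1 := by
    intro t h0 h1
    rcases eq_or_lt_of_le h1 with h | h
    · rw [h, g.y1]; norm_num
    · linarith [(g.memo ⟨h0, h⟩).1]
  have pos2 : ∀ t, 0 < t → t ≤ 1 → 0 < 1 - y (1 - t) := by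
    intro t h0 h1
    rcases eq_or_lt_of_le h1 with h | h
    · rw [h, sub_self, g.y0]; norm_num
    · linarith [(g.memo (t := 1 - t) ⟨by linarith, by linarith⟩).2]
  obtain ⟨c1, hc1, k1⟩ := lin_lower (f := fun t => y t + 1) (g.cy.add continuous_const) (by simp [g.y0])
    ((g.dy 0).add_const 1) g.w0 pos1
  have d2 : HasDerivAt (fun t => 1 - y (1 - t)) (w 1) 0 := by
    have e : HasDerivAt (fun t : ℝ => 1 - t) (-1) 0 := by
      simpa using (hasDerivAt_id (0:ℝ)).const_sub 1
    have e2 : HasDerivAt y (w 1) (1 - 0) := by simpa using g.dy 1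
    have := (e2.comp 0 e).const_sub 1
    simpa using this
  obtain ⟨c2, hc2, k2⟩ := lin_lower (f := fun t => 1 - y (1 - t))
    (continuous_const.sub (g.cy.comp (continuous_const.sub continuous_id))) (by simp [g.y1]) d2 g.w1 pos2
  have hev : ∀ᶠ ε in 𝓝 (0:ℝ), |ε| * N < min c1 c2 := by
    have : Continuous fun ε : ℝ => |ε| * N := by fun_prop
    exact (this.tendsto 0).eventually (gt_mem_nhds (by simp [hc1, hc2]))
  filter_upwards [hev] with ε hε t ht
  have a1 := k1 t ht
  have a2 := k2 (1 - t) ⟨by linarith [ht.2], by linarith [ht.1]⟩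
  rw [sub_sub_cancel] at a2
  have b1 : |ε * η t| ≤ c1 * t := by
    rw [abs_mul]
    calc |ε| * |η t| ≤ |ε| * (N * t) := mul_le_mul_of_nonneg_left (h1 t ht) (abs_nonneg _)
      _ = (|ε| * N) * t := by ring
      _ ≤ c1 * t := mul_le_mul_of_nonneg_right (hε.le.trans (min_le_left _ _)) ht.1
  have b2 : |ε * η t| ≤ c2 * (1 - t) := by
    rw [abs_mul]
    calc |ε| * |η t| ≤ |ε| * (N * (1 - t)) := mul_le_mul_of_nonneg_left (h2 t ht) (abs_nonneg _)
      _ = (|ε| * N) * (1 - t) := by ring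
      _ ≤ c2 * (1 - t) := mul_le_mul_of_nonneg_right (hε.le.trans (min_le_right _ _)) (by linarith [ht.2])
  have c1 := abs_le.1 b1
  have c2 := abs_le.1 b2
  constructor <;> linarith

end TB


namespace TB
open MeasureTheory Set Filter Topology

variable {E F G : ℝ × ℝ → ℝ}

theorem param {f f' : ℝ → ℝ → ℝ} (hf : ∀ ε, Continuous (f ε))
    (hf' : Continuous (fun p : ℝ × ℝ => f' p.1 p.2))
    (hd : ∀ ε t, HasDerivAt (fun ε => f ε t) (f' ε t) ε) (ε0 : ℝ) :
    HasDerivAt (fun ε => ∫ t in (0:ℝ)..1, f ε t) (∫ t in (0:ℝ)..1, f' ε0 t) ε0 := by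
  obtain ⟨M, hM⟩ := (isCompact_Icc.prod isCompact_Icc :
    IsCompact (Icc (ε0 - 1) (ε0 + 1) ×ˢ Icc (0:ℝ) 1)).exists_bound_of_continuousOn hf'.continuousOn
  have hc' : Continuous (f' ε0) := hf'.comp (continuous_const.prodMk continuous_id)
  refine (intervalIntegral.hasDerivAt_integral_of_dominated_loc_of_deriv_le (μ := volume)
    (F := f) (F' := f') (x₀ := ε0) (s := Icc (ε0 - 1) (ε0 + 1)) (bound := fun _ => M) (a := 0) (b := 1)
    (Icc_mem_nhds (by linarith) (by linarith))
    (Eventually.of_forall fun ε => (hf ε).aestronglyMeasurable)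
    ((hf ε0).intervalIntegrable 0 1) hc'.aestronglyMeasurable ?_ (by simp) ?_).2
  · refine Eventually.of_forall fun t ht ε hε => ?_
    rw [uIoc_of_le zero_le_one] at ht
    exact hM (ε, t) ⟨hε, ht.1.le, ht.2⟩
  · exact Eventually.of_forall fun t ht ε hε => hd ε t

theorem second_test {e e' : ℝ → ℝ} {d : ℝ} (h1 : ∀ ε, HasDerivAt e (e' ε) ε) (h2 : HasDerivAt e' d 0)
    (hmin : IsLocalMin e 0) : 0 ≤ d := by
  by_contra hc
  push Not at hc
  have hde : deriv e = e' := funext fun ε => (h1 ε).deriv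
  have hmax : IsLocalMax e 0 := isLocalMax_of_deriv_deriv_neg (by rw [hde, h2.deriv]; exact hc)
    hmin.deriv_eq_zero (h1 0).continuousAt
  have hconst : e =ᶠ[𝓝 0] fun _ => e 0 := by
    filter_upwards [hmin, hmax] with t a b using le_antisymm b a
  have h3 := hconst.deriv.deriv.eq_of_nhds
  rw [hde, h2.deriv] at h3
  simp at h3
  linarith

/-- First order density. -/
noncomputable def Fs (E F G : ℝ × ℝ → ℝ) (x y u w n1 n2 z1 z2 : ℝ) : ℝ :=
  Lag (pdx E) (pdx F) (pdx G) x y u w * n1 + Lag (pdy E) (pdy F) (pdy G) x y u w * n2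
    + 2 * ((E (x, y) * u + F (x, y) * w) * z1 + (F (x, y) * u + G (x, y) * w) * z2)

/-- Second order density. -/
noncomputable def Hs (E F G : ℝ × ℝ → ℝ) (x y u w n1 n2 z1 z2 : ℝ) : ℝ :=
  Fs (pdx E) (pdx F) (pdx G) x y u w n1 n2 z1 z2 * n1
   + Fs (pdy E) (pdy F) (pdy G) x y u w n1 n2 z1 z2 * n2
   + 2 * (((pdx E (x, y) * n1 + pdy E (x, y) * n2) * u + E (x, y) * z1
      + ((pdx F (x, y) * n1 + pdy F (x, y) * n2) * w + F (x, y) * z2)) * z1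
    + ((pdx F (x, y) * n1 + pdy F (x, y) * n2) * u + F (x, y) * z1
      + ((pdx G (x, y) * n1 + pdy G (x, y) * n2) * w + G (x, y) * z2)) * z2)

/-- Smooth coefficients. -/
structure Sm (E F G : ℝ × ℝ → ℝ) : Prop where
  hE : ContDiff ℝ (⊤ : ℕ∞) E
  hF : ContDiff ℝ (⊤ : ℕ∞) F
  hG : ContDiff ℝ (⊤ : ℕ∞) G

theorem Sm.x (h : Sm E F G) : Sm (pdx E) (pdx F) (pdx G) :=
  ⟨pdx_smooth h.hE, pdx_smooth h.hF, pdx_smooth h.hG⟩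

theorem Sm.y (h : Sm E F G) : Sm (pdy E) (pdy F) (pdy G) :=
  ⟨pdy_smooth h.hE, pdy_smooth h.hF, pdy_smooth h.hG⟩

theorem Sm.Lag_cont {α : Type*} [TopologicalSpace α] (h : Sm E F G)
    {X Y U W : α → ℝ} (hX : Continuous X) (hY : Continuous Y) (hU : Continuous U) (hW : Continuous W) :
    Continuous (fun t => Lag E F G (X t) (Y t) (U t) (W t)) := by
  have a1 := h.hE.continuous
  have a2 := h.hF.continuous
  have a3 := h.hG.continuous
  unfold Lag; fun_prop

theorem Sm.Fs_cont {α : Type*} [TopologicalSpace α] (h : Sm E F G)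
    {X Y U W n1 n2 z1 z2 : α → ℝ} (hX : Continuous X) (hY : Continuous Y) (hU : Continuous U) (hW : Continuous W)
    (hn1 : Continuous n1) (hn2 : Continuous n2) (hz1 : Continuous z1) (hz2 : Continuous z2) :
    Continuous (fun t => Fs E F G (X t) (Y t) (U t) (W t) (n1 t) (n2 t) (z1 t) (z2 t)) := by
  have a1 := h.hE.continuous
  have a2 := h.hF.continuous
  have a3 := h.hG.continuous
  have b1 := h.x.Lag_cont hX hY hU hW
  have b2 := h.y.Lag_cont hX hY hU hW
  unfold Fs; fun_prop

theorem Sm.Hs_cont {α : Type*} [TopologicalSpace α] (h : Sm E F G)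
    {X Y U W n1 n2 z1 z2 : α → ℝ} (hX : Continuous X) (hY : Continuous Y) (hU : Continuous U) (hW : Continuous W)
    (hn1 : Continuous n1) (hn2 : Continuous n2) (hz1 : Continuous z1) (hz2 : Continuous z2) :
    Continuous (fun t => Hs E F G (X t) (Y t) (U t) (W t) (n1 t) (n2 t) (z1 t) (z2 t)) := by
  have a1 := h.hE.continuous
  have a2 := h.hF.continuous
  have a3 := h.hG.continuous
  have a4 := h.x.hE.continuous
  have a5 := h.x.hF.continuous
  have a6 := h.x.hG.continuous
  have a7 := h.y.hE.continuous
  have a8 := h.y.hF.continuous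
  have a9 := h.y.hG.continuous
  have b1 := h.x.Fs_cont hX hY hU hW hn1 hn2 hz1 hz2
  have b2 := h.y.Fs_cont hX hY hU hW hn1 hn2 hz1 hz2
  unfold Hs; fun_prop

theorem Sm.Lag_deriv (h : Sm E F G) {X Y U W : ℝ → ℝ} {X' Y' U' W' s : ℝ}
    (hX : HasDerivAt X X' s) (hY : HasDerivAt Y Y' s)
    (hU : HasDerivAt U U' s) (hW : HasDerivAt W W' s) :
    HasDerivAt (fun s => Lag E F G (X s) (Y s) (U s) (W s))
      (Fs E F G (X s) (Y s) (U s) (W s) X' Y' U' W') s := by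
  have e1 := line (smooth_diff h.hE) hX hY
  have e2 := line (smooth_diff h.hF) hX hY
  have e3 := line (smooth_diff h.hG) hX hY
  have := (((e1.mul hU).mul hU).add (((e2.mul hU).mul hW).const_mul 2)).add ((e3.mul hW).mul hW)
  refine this.congr_deriv ?_
  simp only [Fs, Lag, Pi.mul_apply]
  ring

theorem Sm.Fs_deriv (h : Sm E F G) {X Y U W : ℝ → ℝ} {X' Y' U' W' s : ℝ}
    (hX : HasDerivAt X X' s) (hY : HasDerivAt Y Y' s)
    (hU : HasDerivAt U U' s) (hW : HasDerivAt W W' s) :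
    HasDerivAt (fun s => Fs E F G (X s) (Y s) (U s) (W s) X' Y' U' W')
      (Hs E F G (X s) (Y s) (U s) (W s) X' Y' U' W') s := by
  have e1 := line (smooth_diff h.hE) hX hY
  have e2 := line (smooth_diff h.hF) hX hY
  have e3 := line (smooth_diff h.hG) hX hY
  have d1 := h.x.Lag_deriv hX hY hU hW
  have d2 := h.y.Lag_deriv hX hY hU hW
  exact ((d1.mul_const X').add (d2.mul_const Y')).add
    ((((e1.mul hU).add (e2.mul hW)).mul_const U').add (((e2.mul hU).add (e3.mul hW)).mul_const W') |>.const_mul 2)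

theorem Geo.second_var {a : ℝ} {x y u w P1 P2 : ℝ → ℝ} (g : Geo E F G a x y u w P1 P2) (b : ℝ)
    {ζ1 ζ2 : ℝ → ℝ} (h1 : Continuous ζ1) (h2 : Continuous ζ2) (h0 : prim 0 ζ2 1 = 0) :
    0 ≤ ∫ t in (0:ℝ)..1, Hs E F G (x t) (y t) (u t) (w t) (prim b ζ1 t) (prim 0 ζ2 t) (ζ1 t) (ζ2 t) := by
  have hm := g.isMin.met
  have sm : Sm E F G := ⟨hm.hE, hm.hF, hm.hG⟩
  have cx := g.cx
  have cy := g.cy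
  have cu := g.cu
  have cw := g.cw
  have hu := g.isMin.adm.hu
  have hw := g.isMin.adm.hw
  have i1 : IntervalIntegrable ζ1 volume 0 1 := h1.intervalIntegrable 0 1
  have i2 : IntervalIntegrable ζ2 volume 0 1 := h2.intervalIntegrable 0 1
  have m1 : MemLp ζ1 2 mu := cont_memLp h1.continuousOn 2
  have m2 : MemLp ζ2 2 mu := cont_memLp h2.continuousOn 2
  have c1 : Continuous (prim b ζ1) := continuous_iff_continuousAt.2 fun t => (prim_hasDeriv b h1 t).continuousAt
  have c2 : Continuous (prim 0 ζ2) := continuous_iff_continuousAt.2 fun t => (prim_hasDeriv 0 h2 t).continuousAt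
  have aff : ∀ c d ε : ℝ, HasDerivAt (fun ε : ℝ => c + ε * d) d ε := fun c d ε => by
    simpa using ((hasDerivAt_id ε).mul_const d).const_add c
  obtain ⟨N, hN0, hN⟩ := cont_bdd h2.continuousOn
  have hin := g.var_in (η := prim 0 ζ2) (N := N + 1) (by linarith)
    (by
      intro t ht
      have := intervalIntegral.norm_integral_le_of_norm_le_const (a := 0) (b := t) (f := ζ2) (C := N + 1) (by
        intro s hs
        rw [uIoc_of_le ht.1] at hs
        exact (hN s ⟨hs.1.le, hs.2.trans ht.2⟩).trans (by linarith))
      rw [sub_zero, abs_of_nonneg ht.1] at this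
      simpa [prim] using this)
    (by
      intro t ht
      have := intervalIntegral.norm_integral_le_of_norm_le_const (a := t) (b := 1) (f := ζ2) (C := N + 1) (by
        intro s hs
        rw [uIoc_of_le ht.2] at hs
        exact (hN s ⟨ht.1.trans hs.1.le, hs.2⟩).trans (by linarith))
      rw [abs_of_nonneg (by linarith [ht.2])] at this
      have e : prim 0 ζ2 t = - ∫ s in t..1, ζ2 s := by
        have := intervalIntegral.integral_add_adjacent_intervals (h2.intervalIntegrable (μ := volume) 0 t)
          (h2.intervalIntegrable t 1)
        unfold prim at h0 ⊢
        linarith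
      rw [e, abs_neg]; exact this)
  refine second_test
    (e := fun ε => ∫ t in (0:ℝ)..1, Lag E F G (x t + ε * prim b ζ1 t) (y t + ε * prim 0 ζ2 t) (u t + ε * ζ1 t) (w t + ε * ζ2 t))
    (e' := fun ε => ∫ t in (0:ℝ)..1, Fs E F G (x t + ε * prim b ζ1 t) (y t + ε * prim 0 ζ2 t) (u t + ε * ζ1 t) (w t + ε * ζ2 t)
      (prim b ζ1 t) (prim 0 ζ2 t) (ζ1 t) (ζ2 t)) ?_ ?_ ?_
  · refine param (f := fun ε t => Lag E F G (x t + ε * prim b ζ1 t) (y t + ε * prim 0 ζ2 t) (u t + ε * ζ1 t) (w t + ε * ζ2 t))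
      (f' := fun ε t => Fs E F G (x t + ε * prim b ζ1 t) (y t + ε * prim 0 ζ2 t) (u t + ε * ζ1 t) (w t + ε * ζ2 t)
      (prim b ζ1 t) (prim 0 ζ2 t) (ζ1 t) (ζ2 t)) (fun ε => ?_) ?_ ?_
    · apply sm.Lag_cont <;> fun_prop
    · apply sm.Fs_cont <;> fun_prop
    · intro ε t
      exact sm.Lag_deriv (aff _ _ _) (aff _ _ _) (aff _ _ _) (aff _ _ _)
  · have := param (f := fun ε t => Fs E F G (x t + ε * prim b ζ1 t) (y t + ε * prim 0 ζ2 t) (u t + ε * ζ1 t) (w t + ε * ζ2 t)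
      (prim b ζ1 t) (prim 0 ζ2 t) (ζ1 t) (ζ2 t))
      (f' := fun ε t => Hs E F G (x t + ε * prim b ζ1 t) (y t + ε * prim 0 ζ2 t) (u t + ε * ζ1 t) (w t + ε * ζ2 t)
      (prim b ζ1 t) (prim 0 ζ2 t) (ζ1 t) (ζ2 t)) (fun ε => ?_) ?_ ?_ 0
    · simpa using this
    · apply sm.Fs_cont <;> fun_prop
    · apply sm.Hs_cont <;> fun_prop
    · intro ε t
      exact sm.Fs_deriv (aff _ _ _) (aff _ _ _) (aff _ _ _) (aff _ _ _)
  · filter_upwards [hin] with ε hε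
    have py : ∀ t ∈ Icc (0:ℝ) 1, prim (-1) (fun t => w t + ε * ζ2 t) t = y t + ε * prim 0 ζ2 t := by
      intro t ht
      have := prim_add (-1) 0 ε (memLp_ii hw) i2 ht
      rw [mul_zero, add_zero] at this
      rw [this, g.hy]
    have px : ∀ t ∈ Icc (0:ℝ) 1, prim (a + ε * b) (fun t => u t + ε * ζ1 t) t = x t + ε * prim b ζ1 t := by
      intro t ht
      rw [prim_add a b ε (memLp_ii hu) i1 ht, g.hx]
    have e1 : ∫ t in (0:ℝ)..1, Lag E F G (x t + 0 * prim b ζ1 t) (y t + 0 * prim 0 ζ2 t) (u t + 0 * ζ1 t) (w t + 0 * ζ2 t)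
        = en E F G a u w := by
      rw [iint]
      simp [en, g.hx, g.hy]
    have e2 : ∫ t in (0:ℝ)..1, Lag E F G (x t + ε * prim b ζ1 t) (y t + ε * prim 0 ζ2 t) (u t + ε * ζ1 t) (w t + ε * ζ2 t)
        = en E F G (a + ε * b) (fun t => u t + ε * ζ1 t) (fun t => w t + ε * ζ2 t) := by
      rw [iint]
      apply integral_congr_ae
      apply ae_mu
      intro t ht
      simp only [px t ht, py t ht]
    rw [e1, e2]
    refine g.isMin.le _ _ _ ⟨hu.add (m1.const_mul ε), hw.add (m2.const_mul ε), fun t ht => ?_, ?_⟩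
    · rw [py t ht]; exact hε t ht
    · rw [py 1 (by simp), h0, g.y1]; simp

end TB


namespace TB
open MeasureTheory Set Filter Topology

variable {E F G : ℝ × ℝ → ℝ}

theorem bm_analysis {B : ℝ → ℝ} {H : ℝ → ℝ → ℝ} {m : ℝ} (hm : Real.pi ^ 2 ≤ m) (hB : Continuous B)
    (hH : ∀ δ, Continuous (H δ)) (hInt : ∀ δ, 0 ≤ ∫ t in (0:ℝ)..1, H δ t)
    (hd : ∀ t ∈ Ioo (0:ℝ) 1, ∃ K B' : ℝ, 1 ≤ K ∧ HasDerivAt B B' t ∧ ∀ δ,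
      H δ t = (Real.sin (Real.pi * t) + δ) ^ 2 * (B' - 2 * m ^ 2 * K)
        + 2 * (Real.sin (Real.pi * t) + δ) * (Real.pi * Real.cos (Real.pi * t)) * B t
        + (Real.pi * Real.cos (Real.pi * t)) ^ 2 * (2 * m)) : False := by
  have hpi := Real.pi_gt_three
  have key : ∀ δ, ∫ t in (0:ℝ)..1, H δ t ≤ δ ^ 2 * (B 1 - B 0) + 2 * m * (-4 * Real.pi * δ - Real.pi ^ 2 * δ ^ 2) := by
    intro δ
    let Φ : ℝ → ℝ := fun t => (Real.sin (Real.pi * t) + δ) ^ 2 * B t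
      + 2 * m * (Real.pi * (Real.sin (Real.pi * t) * Real.cos (Real.pi * t))
        + 2 * Real.pi * δ * Real.cos (Real.pi * t) - Real.pi ^ 2 * δ ^ 2 * t)
    have hΦ : Continuous Φ := by fun_prop
    have h01 : Φ 1 - Φ 0 = δ ^ 2 * (B 1 - B 0) + 2 * m * (-4 * Real.pi * δ - Real.pi ^ 2 * δ ^ 2) := by
      simp only [Φ, mul_one, mul_zero, Real.sin_pi, Real.cos_pi, Real.sin_zero, Real.cos_zero]
      ring
    rw [← h01]
    choose! K B' hK hB' he using hd
    refine intervalIntegral.integral_le_sub_of_hasDeriv_right_of_le zero_le_one hΦ.continuousOn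
      (g' := fun t => (Real.sin (Real.pi * t) + δ) ^ 2 * B' t
        + 2 * (Real.sin (Real.pi * t) + δ) * (Real.pi * Real.cos (Real.pi * t)) * B t
        + 2 * m * ((Real.pi * Real.cos (Real.pi * t)) ^ 2 - Real.pi ^ 2 * (Real.sin (Real.pi * t) + δ) ^ 2))
      ?_ ((hH δ).integrableOn_Icc) ?_
    · intro t ht
      have hp : HasDerivAt (fun t : ℝ => Real.pi * t) Real.pi t := by
        simpa using (hasDerivAt_id t).const_mul Real.pi
      have hs := hp.sin
      have hc := hp.cos
      have h1 := ((hs.add_const δ).pow 2).mul (hB' t ht)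
      have h2 := ((((hs.mul hc).const_mul Real.pi).add (hc.const_mul (2 * Real.pi * δ))).sub
        ((hasDerivAt_id t).const_mul (Real.pi ^ 2 * δ ^ 2))).const_mul (2 * m)
      refine HasDerivAt.hasDerivWithinAt ((h1.add h2).congr_deriv ?_)
      simp
      ring
    · intro t ht
      rw [he t ht δ]
      have h2 : Real.pi ^ 2 * m ≤ m ^ 2 * K t := by
        have : 0 ≤ m := (sq_nonneg _).trans hm
        have : m ^ 2 ≤ m ^ 2 * K t := le_mul_of_one_le_right (sq_nonneg m) (hK t ht)
        nlinarith
      have := mul_le_mul_of_nonneg_left h2 (sq_nonneg (Real.sin (Real.pi * t) + δ))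
      nlinarith
  set q := |B 1 - B 0| with hq
  have hq0 : 0 ≤ q := abs_nonneg _
  have hδ : 0 < 1 / (1 + q) := by positivity
  set δ := 1 / (1 + q) with hδd
  have h1 := (hInt δ).trans (key δ)
  have h2 : δ * q ≤ 1 := by
    rw [hδd, div_mul_eq_mul_div, div_le_one (by positivity)]; linarith
  have h3 : B 1 - B 0 ≤ q := le_abs_self _
  have h4 : δ ^ 2 * (B 1 - B 0) ≤ δ := by
    calc δ ^ 2 * (B 1 - B 0) ≤ δ ^ 2 * q := mul_le_mul_of_nonneg_left h3 (sq_nonneg _)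
      _ = δ * (δ * q) := by ring
      _ ≤ δ * 1 := mul_le_mul_of_nonneg_left h2 hδ.le
      _ = δ := mul_one _
  have hm1 : 1 ≤ m := by nlinarith
  have h5 : 3 * δ ≤ m * Real.pi * δ := by
    apply mul_le_mul_of_nonneg_right _ hδ.le
    nlinarith
  have h6 : 0 ≤ m * (Real.pi ^ 2 * δ ^ 2) := by positivity
  nlinarith

theorem pd_symm {f : ℝ × ℝ → ℝ} (hf : ContDiff ℝ (⊤ : ℕ∞) f) (p : ℝ × ℝ) :
    pdy (pdx f) p = pdx (pdy f) p := by
  have h1 : ContDiffAt ℝ 2 f p := (contDiff_infty.1 hf 2).contDiffAt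
  have h2 : IsSymmSndFDerivAt ℝ f p := h1.isSymmSndFDerivAt (by simp)
  have hd : DifferentiableAt ℝ (fderiv ℝ f) p :=
    (((contDiff_infty.1 hf 2).fderiv_right (m := 1) (by norm_num)).differentiable (by simp)) p
  have e : ∀ v z : ℝ × ℝ, fderiv ℝ (fun q => fderiv ℝ f q v) p z = fderiv ℝ (fderiv ℝ f) p z v := by
    intro v z
    rw [fderiv_clm_apply hd (differentiableAt_const v)]
    simp
  unfold pdx pdy
  rw [e, e]
  exact h2 _ _

/-- Expansion of the Hessian density along `ψ W`. -/
theorem Hs_expand (x y u w P1 P2 z1 z2 ψ ψ' q D : ℝ) (hq : q ^ 2 = D⁻¹)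
    (hE : pdy (pdx E) (x, y) = pdx (pdy E) (x, y)) (hF : pdy (pdx F) (x, y) = pdx (pdy F) (x, y))
    (hG : pdy (pdx G) (x, y) = pdx (pdy G) (x, y)) :
    Hs E F G x y u w (ψ * (-P2 * q)) (ψ * (P1 * q)) (ψ' * (-P2 * q) + ψ * (z1 * q))
        (ψ' * (P1 * q) + ψ * (z2 * q))
      = ψ ^ 2 * ((((pdx (pdx E) (x, y)*P2^2-2*pdx (pdy E) (x, y)*P1*P2+pdy (pdy E) (x, y)*P1^2)*u^2
          +2*(pdx (pdx F) (x, y)*P2^2-2*pdx (pdy F) (x, y)*P1*P2+pdy (pdy F) (x, y)*P1^2)*u*w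
      +(pdx (pdx G) (x, y)*P2^2-2*pdx (pdy G) (x, y)*P1*P2+pdy (pdy G) (x, y)*P1^2)*w^2)
      + 4*((-pdx E (x, y)*P2+pdy E (x, y)*P1)*u*z1+(-pdx F (x, y)*P2+pdy F (x, y)*P1)*(u*z2+w*z1)
        +(-pdx G (x, y)*P2+pdy G (x, y)*P1)*w*z2)
      + 2*(E (x, y)*z1^2+2*F (x, y)*z1*z2+G (x, y)*z2^2))/D)
      + 2 * ψ * ψ' * (2*(((-pdx E (x, y)*P2+pdy E (x, y)*P1)*u*(-P2)
          +(-pdx F (x, y)*P2+pdy F (x, y)*P1)*(u*P1+w*(-P2))+(-pdx G (x, y)*P2+pdy G (x, y)*P1)*w*P1)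
     + (-E (x, y)*P2*z1+F (x, y)*(P1*z1-P2*z2)+G (x, y)*P1*z2))/D)
      + ψ' ^ 2 * (2 * ((E (x, y) * P2 ^ 2 - 2 * F (x, y) * P1 * P2 + G (x, y) * P1 ^ 2) / D)) := by
  simp only [div_eq_mul_inv, ← hq]
  unfold Hs Fs Lag
  rw [hE, hF, hG]
  ring

end TB


namespace TB
open MeasureTheory Set Filter Topology

variable {E F G : ℝ × ℝ → ℝ}

theorem num_deriv {Ex Ey Fx Fy Gx Gy u w P1 P2 D : ℝ → ℝ}
    {Ex' Ey' Fx' Fy' Gx' Gy' du dw dP1 dP2 dD t : ℝ} (hD0 : D t ≠ 0)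
    (hEx : HasDerivAt Ex Ex' t) (hEy : HasDerivAt Ey Ey' t)
    (hFx : HasDerivAt Fx Fx' t) (hFy : HasDerivAt Fy Fy' t)
    (hGx : HasDerivAt Gx Gx' t) (hGy : HasDerivAt Gy Gy' t)
    (hu : HasDerivAt u du t) (hw : HasDerivAt w dw t)
    (hP1 : HasDerivAt P1 dP1 t) (hP2 : HasDerivAt P2 dP2 t) (hD : HasDerivAt D dD t) :
    HasDerivAt (fun t => (2*((-Ex t*P2 t+Ey t*P1 t)*u t*(-P2 t)+(-Fx t*P2 t+Fy t*P1 t)*(u t*P1 t+w t*(-P2 t))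
        +(-Gx t*P2 t+Gy t*P1 t)*w t*P1 t)
      - ((Ex t*u t+Ey t*w t)*P2 t^2-2*(Fx t*u t+Fy t*w t)*P1 t*P2 t+(Gx t*u t+Gy t*w t)*P1 t^2)) / D t)
    ((2*(((-Ex'*P2 t-Ex t*dP2+Ey'*P1 t+Ey t*dP1)*u t*(-P2 t)
       +(-Fx'*P2 t-Fx t*dP2+Fy'*P1 t+Fy t*dP1)*(u t*P1 t+w t*(-P2 t))
       +(-Gx'*P2 t-Gx t*dP2+Gy'*P1 t+Gy t*dP1)*w t*P1 t)
       + ((-Ex t*P2 t+Ey t*P1 t)*du*(-P2 t)+(-Fx t*P2 t+Fy t*P1 t)*(du*P1 t+dw*(-P2 t))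
          +(-Gx t*P2 t+Gy t*P1 t)*dw*P1 t)
       + ((-Ex t*P2 t+Ey t*P1 t)*u t*(-dP2)+(-Fx t*P2 t+Fy t*P1 t)*(u t*dP1+w t*(-dP2))
          +(-Gx t*P2 t+Gy t*P1 t)*w t*dP1))
      - ((Ex'*u t+Ex t*du+Ey'*w t+Ey t*dw)*P2 t^2
        -2*(Fx'*u t+Fx t*du+Fy'*w t+Fy t*dw)*P1 t*P2 t
        +(Gx'*u t+Gx t*du+Gy'*w t+Gy t*dw)*P1 t^2)
      - (2*(Ex t*u t+Ey t*w t)*P2 t*dP2-2*(Fx t*u t+Fy t*w t)*(P1 t*dP2+dP1*P2 t)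
        +2*(Gx t*u t+Gy t*w t)*P1 t*dP1)) / D t
      - (2*((-Ex t*P2 t+Ey t*P1 t)*u t*(-P2 t)+(-Fx t*P2 t+Fy t*P1 t)*(u t*P1 t+w t*(-P2 t))
        +(-Gx t*P2 t+Gy t*P1 t)*w t*P1 t)
      - ((Ex t*u t+Ey t*w t)*P2 t^2-2*(Fx t*u t+Fy t*w t)*P1 t*P2 t+(Gx t*u t+Gy t*w t)*P1 t^2)) * dD / D t ^ 2) t := by
  have cE := (hEx.neg.mul hP2).add (hEy.mul hP1)
  have cF := (hFx.neg.mul hP2).add (hFy.mul hP1)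
  have cG := (hGx.neg.mul hP2).add (hGy.mul hP1)
  have eE := (hEx.mul hu).add (hEy.mul hw)
  have eF := (hFx.mul hu).add (hFy.mul hw)
  have eG := (hGx.mul hu).add (hGy.mul hw)
  have h1 := ((((cE.mul hu).mul hP2.neg).add (cF.mul ((hu.mul hP1).add (hw.mul hP2.neg)))).add
    ((cG.mul hw).mul hP1)).const_mul 2
  have h2 := ((eE.mul (hP2.pow 2)).sub (((eF.const_mul 2).mul hP1).mul hP2)).add (eG.mul (hP1.pow 2))
  refine ((h1.sub h2).div hD hD0).congr_deriv ?_
  simp only [Pi.add_apply, Pi.mul_apply, Pi.sub_apply, Pi.neg_apply, Pi.pow_apply]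
  field_simp
  ring

theorem prim_eq {V ζ : ℝ → ℝ} (b : ℝ) (hb : b = V 0) (hV : Continuous V) (hζ : Continuous ζ)
    (hd : ∀ t ∈ Ioo (0:ℝ) 1, HasDerivAt V (ζ t) t) {t : ℝ} (ht : t ∈ Icc (0:ℝ) 1) : prim b ζ t = V t := by
  have := intervalIntegral.integral_eq_sub_of_hasDerivAt_of_le ht.1 hV.continuousOn
    (fun s hs => hd s ⟨hs.1, lt_of_lt_of_le hs.2 ht.2⟩) (hζ.intervalIntegrable 0 t)
  unfold prim
  rw [this, hb]; ring

theorem Geo.bm {a : ℝ} {x y u w P1 P2 : ℝ → ℝ} (g : Geo E F G a x y u w P1 P2)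
    (hK : ∀ p : ℝ × ℝ, p.2 ∈ Set.Icc (-1 : ℝ) 1 → 1 ≤ gaussCurvature E F G p)
    (hm : Real.pi ^ 2 ≤ en E F G a u w) : False := by
  have met := g.isMin.met
  have sm : Sm E F G := ⟨met.hE, met.hF, met.hG⟩
  have kE := met.hE.continuous
  have kF := met.hF.continuous
  have kG := met.hG.continuous
  have kEx := (pdx_smooth met.hE).continuous
  have kFx := (pdx_smooth met.hF).continuous
  have kGx := (pdx_smooth met.hG).continuous
  have kEy := (pdy_smooth met.hE).continuous
  have kFy := (pdy_smooth met.hF).continuous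
  have kGy := (pdy_smooth met.hG).continuous
  have cx := g.cx
  have cy := g.cy
  have cP1 := g.cP1
  have cP2 := g.cP2
  have cu := g.cu
  have cw := g.cw
  obtain ⟨D, hD⟩ : ∃ D : ℝ → ℝ, D = fun t => E (x t, y t) * G (x t, y t) - F (x t, y t) ^ 2 := ⟨_, rfl⟩
  obtain ⟨dD, hdD⟩ : ∃ dD : ℝ → ℝ, dD = fun t => (pdx E (x t, y t) * u t + pdy E (x t, y t) * w t) * G (x t, y t)
      + E (x t, y t) * (pdx G (x t, y t) * u t + pdy G (x t, y t) * w t)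
      - 2 * F (x t, y t) * (pdx F (x t, y t) * u t + pdy F (x t, y t) * w t) := ⟨_, rfl⟩
  have hDd : ∀ t, HasDerivAt D (dD t) t := by intro t; rw [hD, hdD]; exact g.dD t
  have hDpos : ∀ t, 0 < D t := by intro t; rw [hD]; exact (met.hpos _).2
  have cD : Continuous D := by rw [hD]; fun_prop
  have cdD : Continuous dD := by rw [hdD]; fun_prop
  obtain ⟨dP1, hdP1⟩ : ∃ d : ℝ → ℝ, d = fun t => Lag (pdx E) (pdx F) (pdx G) (x t) (y t) (u t) (w t) / 2 := ⟨_, rfl⟩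
  obtain ⟨dP2, hdP2⟩ : ∃ d : ℝ → ℝ, d = fun t => Lag (pdy E) (pdy F) (pdy G) (x t) (y t) (u t) (w t) / 2 := ⟨_, rfl⟩
  have cdP1 : Continuous dP1 := by rw [hdP1]; unfold Lag; fun_prop
  have cdP2 : Continuous dP2 := by rw [hdP2]; unfold Lag; fun_prop
  have hP1d : ∀ t ∈ Ioo (0:ℝ) 1, HasDerivAt P1 (dP1 t) t := by rw [hdP1]; exact g.dP1
  have hP2d : ∀ t ∈ Ioo (0:ℝ) 1, HasDerivAt P2 (dP2 t) t := by rw [hdP2]; exact g.dP2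
  obtain ⟨q, hq⟩ : ∃ q : ℝ → ℝ, q = fun t => (√(D t))⁻¹ := ⟨_, rfl⟩
  have hs0 : ∀ t, √(D t) ≠ 0 := fun t => (Real.sqrt_pos.2 (hDpos t)).ne'
  have cq : Continuous q := by rw [hq]; exact cD.sqrt.inv₀ hs0
  have hq2 : ∀ t, q t ^ 2 = (D t)⁻¹ := by
    intro t; rw [hq]; simp only [inv_pow]; rw [Real.sq_sqrt (hDpos t).le]
  have hqd : ∀ t, HasDerivAt q (-(q t * dD t / (2 * D t))) t := by
    intro t
    have := ((hDd t).sqrt (hDpos t).ne').fun_inv (hs0 t)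
    rw [hq]
    refine this.congr_deriv ?_
    rw [Real.sq_sqrt (hDpos t).le]
    have h1 := hs0 t
    have h2 := (hDpos t).ne'
    field_simp
  obtain ⟨z1, hz1⟩ : ∃ z : ℝ → ℝ, z = fun t => -dP2 t + P2 t * dD t / (2 * D t) := ⟨_, rfl⟩
  obtain ⟨z2, hz2⟩ : ∃ z : ℝ → ℝ, z = fun t => dP1 t - P1 t * dD t / (2 * D t) := ⟨_, rfl⟩
  have hD2 : ∀ t, 2 * D t ≠ 0 := fun t => by have := hDpos t; positivity
  have cz1 : Continuous z1 := by rw [hz1]; exact cdP2.neg.add ((cP2.mul cdD).div (by fun_prop) hD2)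
  have cz2 : Continuous z2 := by rw [hz2]; exact cdP1.sub ((cP1.mul cdD).div (by fun_prop) hD2)
  have W1d : ∀ t ∈ Ioo (0:ℝ) 1, HasDerivAt (fun t => -P2 t * q t) (z1 t * q t) t := by
    intro t ht
    refine ((hP2d t ht).fun_neg.fun_mul (hqd t)).congr_deriv ?_
    rw [hz1]; ring
  have W2d : ∀ t ∈ Ioo (0:ℝ) 1, HasDerivAt (fun t => P1 t * q t) (z2 t * q t) t := by
    intro t ht
    refine ((hP1d t ht).fun_mul (hqd t)).congr_deriv ?_
    rw [hz2]; ring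
  obtain ⟨S, hS⟩ : ∃ S : ℝ → ℝ → ℝ, S = fun δ t => Real.sin (Real.pi * t) + δ := ⟨_, rfl⟩
  obtain ⟨S', hS'⟩ : ∃ S' : ℝ → ℝ, S' = fun t => Real.pi * Real.cos (Real.pi * t) := ⟨_, rfl⟩
  have cS : ∀ δ, Continuous (S δ) := by intro δ; rw [hS]; fun_prop
  have cS' : Continuous S' := by rw [hS']; fun_prop
  have Sd : ∀ δ t, HasDerivAt (S δ) (S' t) t := by
    intro δ t
    have hp : HasDerivAt (fun t : ℝ => Real.pi * t) Real.pi t := by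
      simpa using (hasDerivAt_id t).const_mul Real.pi
    rw [hS, hS']
    exact (hp.sin.add_const δ).congr_deriv (mul_comm _ _)
  let ζ1 : ℝ → ℝ → ℝ := fun δ t => S' t * (-P2 t * q t) + S δ t * (z1 t * q t)
  let ζ2 : ℝ → ℝ → ℝ := fun δ t => S' t * (P1 t * q t) + S δ t * (z2 t * q t)
  have cζ1 : ∀ δ, Continuous (ζ1 δ) := fun δ => by have := cS δ; fun_prop
  have cζ2 : ∀ δ, Continuous (ζ2 δ) := fun δ => by have := cS δ; fun_prop
  let V1 : ℝ → ℝ → ℝ := fun δ t => S δ t * (-P2 t * q t)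
  let V2 : ℝ → ℝ → ℝ := fun δ t => S δ t * (P1 t * q t)
  have cV1 : ∀ δ, Continuous (V1 δ) := fun δ => by have := cS δ; fun_prop
  have cV2 : ∀ δ, Continuous (V2 δ) := fun δ => by have := cS δ; fun_prop
  have pV1 : ∀ δ, ∀ t ∈ Icc (0:ℝ) 1, prim (V1 δ 0) (ζ1 δ) t = V1 δ t := fun δ t ht =>
    prim_eq _ rfl (cV1 δ) (cζ1 δ) (fun s hs => (Sd δ s).fun_mul (W1d s hs)) ht
  have pV2 : ∀ δ, ∀ t ∈ Icc (0:ℝ) 1, prim 0 (ζ2 δ) t = V2 δ t := fun δ t ht =>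
    prim_eq _ (by simp [V2, g.b0]) (cV2 δ) (cζ2 δ) (fun s hs => (Sd δ s).fun_mul (W2d s hs)) ht
  have hvar : ∀ δ, 0 ≤ ∫ t in (0:ℝ)..1, Hs E F G (x t) (y t) (u t) (w t) (V1 δ t) (V2 δ t) (ζ1 δ t) (ζ2 δ t) := by
    intro δ
    have h := g.second_var (V1 δ 0) (cζ1 δ) (cζ2 δ) (by rw [pV2 δ 1 (by simp)]; simp [V2, g.b1])
    have e : (∫ t in (0:ℝ)..1, Hs E F G (x t) (y t) (u t) (w t) (prim (V1 δ 0) (ζ1 δ) t)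
        (prim 0 (ζ2 δ) t) (ζ1 δ t) (ζ2 δ t)) = ∫ t in (0:ℝ)..1, Hs E F G (x t) (y t) (u t) (w t)
        (V1 δ t) (V2 δ t) (ζ1 δ t) (ζ2 δ t) := by
      apply intervalIntegral.integral_congr
      intro t ht
      rw [uIcc_of_le zero_le_one] at ht
      simp only [pV1 δ t ht, pV2 δ t ht]
    rwa [e] at h
  refine bm_analysis hm (B := fun t => (2*((-pdx E (x t, y t)*P2 t+pdy E (x t, y t)*P1 t)*u t*(-P2 t)
        +(-pdx F (x t, y t)*P2 t+pdy F (x t, y t)*P1 t)*(u t*P1 t+w t*(-P2 t))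
        +(-pdx G (x t, y t)*P2 t+pdy G (x t, y t)*P1 t)*w t*P1 t)
      - ((pdx E (x t, y t)*u t+pdy E (x t, y t)*w t)*P2 t^2-2*(pdx F (x t, y t)*u t+pdy F (x t, y t)*w t)*P1 t*P2 t
        +(pdx G (x t, y t)*u t+pdy G (x t, y t)*w t)*P1 t^2)) / D t)
    (Continuous.div (by fun_prop) cD fun t => (hDpos t).ne') ?_ hvar ?_
  · intro δ
    exact sm.Hs_cont g.cx g.cy cu cw (cV1 δ) (cV2 δ) (cζ1 δ) (cζ2 δ)
  · intro t ht
    have hti := Ioo_subset_Icc_self ht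
    refine ⟨gaussCurvature E F G (x t, y t), _, hK _ (g.mem hti), num_deriv (hDpos t).ne'
      (g.dcomp (pdx_smooth met.hE) t) (g.dcomp (pdy_smooth met.hE) t)
      (g.dcomp (pdx_smooth met.hF) t) (g.dcomp (pdy_smooth met.hF) t)
      (g.dcomp (pdx_smooth met.hG) t) (g.dcomp (pdy_smooth met.hG) t)
      (g.du ht) (g.dw ht) (hP1d t ht) (hP2d t ht) (hDd t), fun δ => ?_⟩
    simp only [V1, V2, ζ1, ζ2]
    rw [Hs_expand (x t) (y t) (u t) (w t) (P1 t) (P2 t) (z1 t) (z2 t) (S δ t) (S' t) (q t) (D t) (hq2 t)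
      (pd_symm met.hE _) (pd_symm met.hF _) (pd_symm met.hG _)]
    rw [pd_symm met.hE, pd_symm met.hF, pd_symm met.hG]
    have hsp := g.speed hti
    have eP1 : P1 t = E (x t, y t) * u t + F (x t, y t) * w t := by rw [g.hP1]
    have eP2 : P2 t = F (x t, y t) * u t + G (x t, y t) * w t := by rw [g.hP2]
    have eD : D t = E (x t, y t) * G (x t, y t) - F (x t, y t) ^ 2 := by rw [hD]
    have edP1 : dP1 t = Lag (pdx E) (pdx F) (pdx G) (x t) (y t) (u t) (w t) / 2 := by rw [hdP1]
    have edP2 : dP2 t = Lag (pdy E) (pdy F) (pdy G) (x t) (y t) (u t) (w t) / 2 := by rw [hdP2]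
    have ezz1 : z1 t = -dP2 t + P2 t * dD t / (2 * D t) := by rw [hz1]
    have ezz2 : z2 t = dP1 t - P1 t * dD t / (2 * D t) := by rw [hz2]
    have edD := congrFun hdD t
    have eS : Real.sin (Real.pi * t) + δ = S δ t := by rw [hS]
    have eS' : Real.pi * Real.cos (Real.pi * t) = S' t := by rw [hS']
    rw [eS, eS']
    have h3 : (E (x t, y t) * P2 t ^ 2 - 2 * F (x t, y t) * P1 t * P2 t + G (x t, y t) * P1 t ^ 2) / D t
        = en E F G a u w := by
      rw [← hsp, div_eq_iff (hDpos t).ne', eP1, eP2, eD, Lag]; ring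
    have h1 := A1_alg (E (x t, y t)) (F (x t, y t)) (G (x t, y t)) (pdx E (x t, y t)) (pdy E (x t, y t))
      (pdx F (x t, y t)) (pdy F (x t, y t)) (pdx G (x t, y t)) (pdy G (x t, y t)) (u t) (w t) (P1 t) (P2 t)
      (dP1 t) (dP2 t) _ _ _ (D t) (dD t) (z1 t) (z2 t) _ _ (hDpos t).ne' eD eP1 eP2
      (by rw [edP1, Lag]; ring) (by rw [edP2, Lag]; ring) rfl rfl rfl edD ezz1 ezz2 rfl rfl
    have h2 := hess_alg (E (x t, y t)) (F (x t, y t)) (G (x t, y t)) (pdx E (x t, y t)) (pdy E (x t, y t))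
      (pdx F (x t, y t)) (pdy F (x t, y t)) (pdx G (x t, y t)) (pdy G (x t, y t))
      (pdx (pdx E) (x t, y t)) (pdx (pdy E) (x t, y t)) (pdy (pdy E) (x t, y t))
      (pdx (pdx F) (x t, y t)) (pdx (pdy F) (x t, y t)) (pdy (pdy F) (x t, y t))
      (pdx (pdx G) (x t, y t)) (pdx (pdy G) (x t, y t)) (pdy (pdy G) (x t, y t))
      (u t) (w t) (P1 t) (P2 t)
      (dP1 t) (dP2 t) _ _ _ _ _ (D t) (dD t) (z1 t) (z2 t) _ _ _ (gaussCurvature E F G (x t, y t))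
      (hDpos t).ne' eD eP1 eP2
      (by rw [edP1, Lag]; ring) (by rw [edP2, Lag]; ring) rfl rfl rfl rfl rfl edD ezz1 ezz2 rfl rfl rfl
      (by rw [eD, gaussCurvature])
    rw [h3, h1]
    have h4 : E (x t, y t) * u t ^ 2 + 2 * F (x t, y t) * u t * w t + G (x t, y t) * w t ^ 2 = en E F G a u w := by
      rw [← hsp, Lag]; ring
    rw [h4] at h2
    simp only [← edP1, ← edP2, ← eD]
    linear_combination (S δ t ^ 2) * h2

end TB

theorem torical_band_width_inequality_dim_one
    (E F G : ℝ × ℝ → ℝ)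
    (hE : ContDiff ℝ (⊤ : ℕ∞) E) (hF : ContDiff ℝ (⊤ : ℕ∞) F) (hG : ContDiff ℝ (⊤ : ℕ∞) G)
    (hEper : ∀ p : ℝ × ℝ, E (p.1 + 1, p.2) = E p)
    (hFper : ∀ p : ℝ × ℝ, F (p.1 + 1, p.2) = F p)
    (hGper : ∀ p : ℝ × ℝ, G (p.1 + 1, p.2) = G p)
    (hpos : ∀ p : ℝ × ℝ, 0 < E p ∧ 0 < E p * G p - F p ^ 2)
    (hK : ∀ p : ℝ × ℝ, p.2 ∈ Set.Icc (-1 : ℝ) 1 → 1 ≤ gaussCurvature E F G p) :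
    ∃ γ : ℝ → ℝ × ℝ, ContDiff ℝ 1 γ ∧ (γ 0).2 = -1 ∧ (γ 1).2 = 1 ∧
      (∀ t ∈ Set.Icc (0:ℝ) 1, (γ t).2 ∈ Set.Icc (-1:ℝ) 1) ∧
      pathLength E F G γ < Real.pi := by
  have met : TB.Met E F G := ⟨hE, hF, hG, hEper, hFper, hGper, hpos⟩
  obtain ⟨a, x, y, u, w, P1, P2, g⟩ := TB.exists_geo met
  have hm : TB.en E F G a u w < Real.pi ^ 2 := by
    by_contra hc
    exact g.bm hK (not_lt.1 hc)
  have hd : ∀ t, HasDerivAt (fun t => (x t, y t)) (u t, w t) t := fun t => (g.dx t).prodMk (g.dy t)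
  have hde : deriv (fun t => (x t, y t)) = fun t => (u t, w t) := funext fun t => (hd t).deriv
  refine ⟨fun t => (x t, y t), ?_, g.y0, g.y1, fun t ht => g.mem ht, ?_⟩
  · rw [contDiff_one_iff_deriv]
    refine ⟨fun t => (hd t).differentiableAt, ?_⟩
    rw [hde]
    exact g.cu.prodMk g.cw
  · unfold pathLength
    rw [hde]
    have e : (∫ t in (0:ℝ)..1, Real.sqrt (E (x t, y t) * u t ^ 2 + 2 * F (x t, y t) * u t * w t
        + G (x t, y t) * w t ^ 2)) = ∫ t in (0:ℝ)..1, Real.sqrt (TB.en E F G a u w) := by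
      apply intervalIntegral.integral_congr
      intro t ht
      rw [Set.uIcc_of_le zero_le_one] at ht
      simp only
      rw [← g.speed ht, TB.Lag]
      congr 1
      ring
    simp only
    rw [e]
    simp only [intervalIntegral.integral_const, sub_zero, one_smul]
    rw [Real.sqrt_lt' Real.pi_pos]
    exact hm
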